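/- arXiv:2209.02171 — 5 statements merged into one kernel-verified Lean document; each statement's English description precedes it below -/
import Mathlib

section
/- Let Φ be an irreducible (finite, reduced, crystallographic) root system of rank r in a finite-dimensional real vector space, and let Ψ be a proper root subsystem of Φ (a subset Ψ ⊊ Φ stable under the reflections s_β for all β ∈ Ψ). Then |Φ| − |Ψ| ≥ 2r; equivalently, Φ \ Ψ contains at least 2r roots. -/
open scoped RealInnerProductSpace

/-!
The reflections in `Ψ` permute `Φ \ Ψ`, hence preserve the span `U` of `Φ \ Ψ`. A reflection `s_β`
preserves a subspace only if `β` lies in it or is orthogonal to it, so every root lies in `U` or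
in `Uᗮ`; irreducibility forces `Φ ⊆ U`. Thus `Φ \ Ψ` contains a basis of the span of `Φ`, and,
being symmetric, also the negatives of that basis.
-/

open Submodule
open scoped Cardinal Pointwise

theorem disjoint_neg_of_linearIndepOn_id {R M : Type*} [Ring R] [NeZero (2 : R)] [AddCommGroup M]
    [Module R M] {b : Set M} (hb : LinearIndepOn R id b) :
    Disjoint b (-b) := by
  have : Nontrivial R := ⟨2, 0, two_ne_zero⟩
  rw [Set.disjoint_left]
  intro x hx hneg
  have hself : x = -x := by
    by_contra hne
    have hpair : LinearIndepOn R id {x, -x} := hb.mono (Set.pair_subset hx hneg)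
    have hcoeff := (LinearIndepOn.pair_iff id hne).mp hpair 1 1 (by simp)
    exact one_ne_zero hcoeff.1
  have htwo : (2 : R) • x = (0 : R) • x := by
    rw [two_smul, zero_smul, ← eq_neg_iff_add_eq_zero, ← hself]
  exact two_ne_zero (LinearIndependent.smul_left_injective hb ⟨x, hx⟩ htwo)

theorem two_mul_rank_span_le_mk_of_neg_mem {K V : Type*} [DivisionRing K] [NeZero (2 : K)]
    [AddCommGroup V] [Module K V] {T : Set V} (hT : ∀ v ∈ T, -v ∈ T) :
    2 * Module.rank K (span K T) ≤ #T := by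
  obtain ⟨b, hbT, hspan, hb⟩ := exists_linearIndependent K T
  have hnegT : -b ⊆ T := fun v hv => neg_neg v ▸ hT _ (hbT hv)
  calc 2 * Module.rank K (span K T) = #b + #(-b : Set V) := by
        rw [← hspan, rank_span_set hb, Cardinal.mk_neg, two_mul]
    _ = #(b ∪ -b : Set V) :=
        (Cardinal.mk_union_of_disjoint (disjoint_neg_of_linearIndepOn_id hb)).symm
    _ ≤ #T := Cardinal.mk_le_mk_of_subset (Set.union_subset hbT hnegT)

theorem card_add_two_mul_finrank_span_le_of_le_mk_diff {K V : Type*} [Semiring K]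
    [StrongRankCondition K] [AddCommMonoid V] [Module K V] {Φ Ψ : Finset V} (hΨΦ : Ψ ⊆ Φ)
    (h : 2 * Module.rank K (span K (Φ : Set V)) ≤ #(Φ \ Ψ : Set V)) :
    Ψ.card + 2 * Module.finrank K (span K (Φ : Set V)) ≤ Φ.card := by
  classical
  have : Module.Finite K (span K (Φ : Set V)) := .span_finset K Φ
  rw [← Module.finrank_eq_rank, ← Finset.coe_sdiff, Finset.coe_sort_coe, Cardinal.mk_coe_finset]
    at h
  have hsdiff : 2 * Module.finrank K (span K (Φ : Set V)) ≤ (Φ \ Ψ).card := by exact_mod_cast h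
  have hadd := Finset.card_sdiff_add_card_eq_card hΨΦ
  omega

section Reflection

variable {𝕜 V : Type*} [RCLike 𝕜] [NormedAddCommGroup V] [InnerProductSpace 𝕜 V]

theorem reflection_orthogonal_span_singleton_apply (α β : V) :
    (𝕜 ∙ α)ᗮ.reflection β = β - (2 * inner 𝕜 α β / inner 𝕜 α α) • α := by
  rw [reflection_orthogonal_apply, reflection_singleton_apply, neg_sub, inner_self_eq_norm_sq_to_K,
    ← Nat.cast_smul_eq_nsmul 𝕜, smul_smul, Nat.cast_ofNat, mul_div_assoc]

theorem real_sub_smul_eq_reflection {V : Type*} [NormedAddCommGroup V] [InnerProductSpace ℝ V]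
    (α β : V) : β - (2 * ⟪β, α⟫ / ⟪α, α⟫) • α = (ℝ ∙ α)ᗮ.reflection β := by
  rw [reflection_orthogonal_span_singleton_apply, real_inner_comm]

theorem mem_or_mem_orthogonal_of_reflection_mem {U : Submodule 𝕜 V} {β : V}
    (hU : ∀ u ∈ U, (𝕜 ∙ β)ᗮ.reflection u ∈ U) : β ∈ U ∨ β ∈ Uᗮ := by
  refine or_iff_not_imp_left.mpr fun hβ => (mem_orthogonal' U β).mpr fun u hu => ?_
  have hmul : (2 * inner 𝕜 β u / inner 𝕜 β β) • β ∈ U := by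
    have hsub := U.sub_mem hu (hU u hu)
    rwa [reflection_orthogonal_span_singleton_apply, sub_sub_cancel] at hsub
  by_contra hne
  have hβ₀ : inner 𝕜 β β ≠ 0 := inner_self_ne_zero.mpr fun h => hne (h ▸ inner_zero_left u)
  exact hβ ((U.smul_mem_iff (div_ne_zero (mul_ne_zero two_ne_zero hne) hβ₀)).mp hmul)

theorem reflection_mem_span {T : Set V} {β : V} (hT : ∀ γ ∈ T, (𝕜 ∙ β)ᗮ.reflection γ ∈ T) :
    ∀ u ∈ span 𝕜 T, (𝕜 ∙ β)ᗮ.reflection u ∈ span 𝕜 T :=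
  have hle : span 𝕜 T ≤ (span 𝕜 T).comap (𝕜 ∙ β)ᗮ.reflection.toLinearEquiv.toLinearMap :=
    span_le.mpr fun γ hγ => subset_span (hT γ hγ)
  hle

variable (𝕜) in
/-- A set of vectors stable under the reflections in the hyperplanes orthogonal to its elements: a
root system without the finiteness, reducedness and integrality axioms. The reflection in `0` is
the identity, so `0` is allowed as an element. -/
def IsReflectionClosed (Φ : Set V) : Prop :=
  ∀ α ∈ Φ, ∀ β ∈ Φ, (𝕜 ∙ α)ᗮ.reflection β ∈ Φ

variable (𝕜) in
/-- Irreducibility of a root system: it is not the union of two nonempty, mutually orthogonal,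
disjoint subsets. The partition is encoded by one part `S`, the other one being `Φ \ S`. -/
def IsOrthogonallyIrreducible (Φ : Set V) : Prop :=
  ∀ S ⊆ Φ, (∀ α ∈ S, ∀ β ∈ Φ \ S, inner 𝕜 α β = 0) → S = ∅ ∨ S = Φ

theorem isOrthogonallyIrreducible_coe [DecidableEq V] {Φ : Finset V}
    (hirr : ∀ S₁ S₂ : Finset V, Disjoint S₁ S₂ → Φ = S₁ ∪ S₂ →
      (∀ α ∈ S₁, ∀ β ∈ S₂, inner 𝕜 α β = 0) → S₁ = ∅ ∨ S₂ = ∅) :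
    IsOrthogonallyIrreducible 𝕜 (Φ : Set V) := by
  intro S hS horth
  lift S to Finset V using Φ.finite_toSet.subset hS
  rw [Finset.coe_subset] at hS
  norm_cast at horth ⊢
  have hpart : Φ = S ∪ Φ \ S := (Finset.union_sdiff_of_subset hS).symm
  exact (hirr S (Φ \ S) Finset.disjoint_sdiff hpart horth).imp_right
    fun h => hS.antisymm (Finset.sdiff_eq_empty_iff_subset.mp h)

namespace IsReflectionClosed

variable {Φ Ψ : Set V}

theorem neg_mem (hΦ : IsReflectionClosed 𝕜 Φ) {α : V} (hα : α ∈ Φ) : -α ∈ Φ :=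
  reflection_orthogonalComplement_singleton_eq_neg (𝕜 := 𝕜) α ▸ hΦ α hα α hα

theorem neg_mem_diff (hΦ : IsReflectionClosed 𝕜 Φ) (hΨ : IsReflectionClosed 𝕜 Ψ) {γ : V}
    (hγ : γ ∈ Φ \ Ψ) : -γ ∈ Φ \ Ψ :=
  ⟨hΦ.neg_mem hγ.1, fun h => hγ.2 (neg_neg γ ▸ hΨ.neg_mem h)⟩

theorem reflection_mem_diff (hΦ : IsReflectionClosed 𝕜 Φ) (hΨ : IsReflectionClosed 𝕜 Ψ)
    (hΨΦ : Ψ ⊆ Φ) {β γ : V} (hβ : β ∈ Ψ) (hγ : γ ∈ Φ \ Ψ) :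
    (𝕜 ∙ β)ᗮ.reflection γ ∈ Φ \ Ψ :=
  ⟨hΦ β (hΨΦ hβ) γ hγ.1, fun h => hγ.2 (reflection_reflection (𝕜 ∙ β)ᗮ γ ▸ hΨ β hβ _ h)⟩

theorem mem_span_diff_or_mem_orthogonal (hΦ : IsReflectionClosed 𝕜 Φ)
    (hΨ : IsReflectionClosed 𝕜 Ψ) (hΨΦ : Ψ ⊆ Φ) {β : V} (hβ : β ∈ Φ) :
    β ∈ span 𝕜 (Φ \ Ψ) ∨ β ∈ (span 𝕜 (Φ \ Ψ))ᗮ := by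
  by_cases hβΨ : β ∈ Ψ
  · exact mem_or_mem_orthogonal_of_reflection_mem <|
      reflection_mem_span fun _ => hΦ.reflection_mem_diff hΨ hΨΦ hβΨ
  · exact .inl (subset_span ⟨hβ, hβΨ⟩)

theorem span_diff_eq_span (hΦ : IsReflectionClosed 𝕜 Φ) (hirr : IsOrthogonallyIrreducible 𝕜 Φ)
    (hΨ : IsReflectionClosed 𝕜 Ψ) (hΨΦ : Ψ ⊂ Φ) : span 𝕜 (Φ \ Ψ) = span 𝕜 Φ := by
  set U := span 𝕜 (Φ \ Ψ)
  have horth : ∀ α ∈ Φ ∩ U, ∀ β ∈ Φ \ (Φ ∩ U), inner 𝕜 α β = 0 := by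
    rintro α ⟨-, hαU⟩ β ⟨hβ, hβU⟩
    have hβorth : β ∈ Uᗮ := (hΦ.mem_span_diff_or_mem_orthogonal hΨ hΨΦ.subset hβ).resolve_left
      fun h => hβU ⟨hβ, h⟩
    exact inner_right_of_mem_orthogonal hαU hβorth
  obtain ⟨γ, hγ⟩ := Set.nonempty_of_ssubset hΨΦ
  have hne : (Φ ∩ U : Set V) ≠ ∅ := Set.Nonempty.ne_empty ⟨γ, hγ.1, subset_span hγ⟩
  have hΦU : Φ ⊆ U :=
    Set.inter_eq_left.mp ((hirr _ Set.inter_subset_left horth).resolve_left hne)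
  exact (span_mono Set.sdiff_subset).antisymm (span_le.mpr hΦU)

end IsReflectionClosed

theorem card_sub_card_subsystem_ge_two_mul_rank_general {Φ Ψ : Set V}
    (hΦ : IsReflectionClosed 𝕜 Φ) (hirr : IsOrthogonallyIrreducible 𝕜 Φ)
    (hΨ : IsReflectionClosed 𝕜 Ψ) (hΨΦ : Ψ ⊂ Φ) :
    2 * Module.rank 𝕜 (span 𝕜 Φ) ≤ #(Φ \ Ψ : Set V) :=
  hΦ.span_diff_eq_span hirr hΨ hΨΦ ▸
    two_mul_rank_span_le_mk_of_neg_mem fun _ => hΦ.neg_mem_diff hΨ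

end Reflection

/-- If `Φ` is an irreducible (finite, reduced, crystallographic) root system of rank `r`
in a finite-dimensional real inner product space and `Ψ ⊊ Φ` is a proper root subsystem,
then `|Φ| - |Ψ| ≥ 2r`. -/
theorem card_sub_card_subsystem_ge_two_mul_rank
    {V : Type*} [NormedAddCommGroup V] [DecidableEq V] [InnerProductSpace ℝ V] [FiniteDimensional ℝ V]
    (Φ : Finset V)
    (hzero : (0 : V) ∉ Φ)
    (hrefl : ∀ α ∈ Φ, ∀ β ∈ Φ, β - (2 * ⟪β, α⟫ / ⟪α, α⟫) • α ∈ Φ)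
    (hcrys : ∀ α ∈ Φ, ∀ β ∈ Φ, ∃ n : ℤ, 2 * ⟪β, α⟫ / ⟪α, α⟫ = (n : ℝ))
    (hred : ∀ α ∈ Φ, ∀ c : ℝ, c • α ∈ Φ → c = 1 ∨ c = -1)
    (hirr : ∀ S₁ S₂ : Finset V, Disjoint S₁ S₂ → Φ = S₁ ∪ S₂ →
      (∀ α ∈ S₁, ∀ β ∈ S₂, ⟪α, β⟫ = 0) → S₁ = ∅ ∨ S₂ = ∅)
    (Ψ : Finset V) (hΨΦ : Ψ ⊆ Φ) (hproper : Ψ ≠ Φ)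
    (hΨrefl : ∀ β ∈ Ψ, ∀ γ ∈ Ψ, γ - (2 * ⟪γ, β⟫ / ⟪β, β⟫) • β ∈ Ψ) :
    Ψ.card + 2 * Module.finrank ℝ (Submodule.span ℝ (Φ : Set V)) ≤ Φ.card := by
  simp only [real_sub_smul_eq_reflection] at hrefl hΨrefl
  exact card_add_two_mul_finrank_span_le_of_le_mk_diff hΨΦ <|
    card_sub_card_subsystem_ge_two_mul_rank_general hrefl (isOrthogonallyIrreducible_coe hirr)
      hΨrefl (mod_cast hΨΦ.ssubset_of_ne hproper)
end

section
/- Let F be a finite field with q elements of odd characteristic and let a, b, c, d ∈ Fˣ satisfy a ≠ b, c ≠ d, abcd = 1, and ac ≠ 1, ad ≠ 1, bc ≠ 1, bd ≠ 1. Let C₁, C₂ be the conjugacy classes of diag(a,b) and diag(c,d) in GL₂(F), and let C₃ be the regular unipotent conjugacy class of GL₂(F). Then the number of triples (S₁, S₂, S₃) ∈ C₁ × C₂ × C₃ with S₁S₂S₃ = 1 equals q³ − q; that is, such triples form a single orbit under simultaneous conjugation by GL₂(F), with trivial projective stabilizers. -/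
/-!
Let `(A, B, C)` be such a triple and `v` an eigenvector of `A` for the eigenvalue `a`. If `v` were
an eigenvector of `B`, then it would be one of `C = (A * B)⁻¹` as well, and multiplying the three
eigenvalues would contradict genericity. So `v, B v` is a basis. In this basis `B` is the companion
matrix of its characteristic polynomial, and `A` is upper triangular with diagonal `a, b` and its
last entry is determined by `trace (A * B)`. Hence the triples form a single orbit of `GL₂`
under conjugation. As `A` and `B` do not commute, only scalar matrices commute with both, and the
orbit has as many elements as `PGL₂(F)`.
-/

open Matrix MulAction

section ProductOneTriples

variable {M : Type*} [Monoid M]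

/-- The triples with product `1` in the product of the conjugacy classes of `a`, `b` and `c`: the
representation variety of the three-punctured sphere with prescribed local monodromies. It is
encoded as a subset of `M × M × M`, on which `ConjAct Mˣ` acts by simultaneous conjugation. -/
def productOneTriples (a b c : M) : Set (M × M × M) :=
  {x | IsConj a x.1 ∧ IsConj b x.2.1 ∧ IsConj c x.2.2 ∧ x.1 * x.2.1 * x.2.2 = 1}

theorem conjAct_smul_eq_iff_semiconjBy {g : ConjAct Mˣ} {a b : M} :
    g • a = b ↔ SemiconjBy ((ConjAct.ofConjAct g : Mˣ) : M) a b := by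
  rw [ConjAct.units_smul_def, Units.mul_inv_eq_iff_eq_mul, SemiconjBy]

theorem isConj_conjAct_smul (g : ConjAct Mˣ) (a : M) : IsConj a (g • a) :=
  ⟨ConjAct.ofConjAct (G := Mˣ) g, conjAct_smul_eq_iff_semiconjBy.1 rfl⟩

theorem conjAct_smul_mem_productOneTriples {a b c : M} (g : ConjAct Mˣ) {x : M × M × M}
    (hx : x ∈ productOneTriples a b c) : g • x ∈ productOneTriples a b c := by
  obtain ⟨h₁, h₂, h₃, h⟩ := hx
  refine ⟨h₁.trans (isConj_conjAct_smul g _), h₂.trans (isConj_conjAct_smul g _),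
    h₃.trans (isConj_conjAct_smul g _), ?_⟩
  simp only [Prod.smul_fst, Prod.smul_snd, ← smul_mul', h, smul_one]

theorem productOneTriples_ext [IsDedekindFiniteMonoid M] {a b c : M} {x y : M × M × M}
    (hx : x ∈ productOneTriples a b c) (hy : y ∈ productOneTriples a b c)
    (h₁ : x.1 = y.1) (h₂ : x.2.1 = y.2.1) : x = y := by
  have h₃ : x.2.2 = y.2.2 := by
    refine left_inv_eq_right_inv (mul_eq_one_comm.1 hx.2.2.2) ?_
    rw [h₁, h₂, hy.2.2.2]
  exact Prod.ext h₁ (Prod.ext h₂ h₃)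

end ProductOneTriples

section Conjugation

theorem spectrum_eq_of_isConj {R A : Type*} [CommSemiring R] [Ring A] [Algebra R A] {a b : A}
    (h : IsConj a b) : spectrum R a = spectrum R b := by
  obtain ⟨u, hu⟩ := h
  rw [← spectrum.units_conjugate (u := u), hu.eq, Units.mul_inv_cancel_right]

variable {n R : Type*} [Fintype n] [DecidableEq n] [CommRing R] {A B : Matrix n n R}

theorem trace_eq_of_isConj (h : IsConj A B) : A.trace = B.trace := by
  obtain ⟨u, hu⟩ := h
  rw [← trace_units_conj u A, hu.eq, Units.mul_inv_cancel_right]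

theorem det_eq_of_isConj (h : IsConj A B) : A.det = B.det := by
  obtain ⟨u, hu⟩ := h
  rw [← det_units_conj u A, hu.eq, Units.mul_inv_cancel_right]

theorem mem_spectrum_iff_exists_mulVec_eq_smul {F : Type*} [Field F] {A : Matrix n n F} {μ : F} :
    μ ∈ spectrum F A ↔ ∃ v ≠ 0, A *ᵥ v = μ • v := by
  rw [← spectrum_toLin', ← Module.End.hasEigenvalue_iff_mem_spectrum]
  refine ⟨fun h ↦ ?_, fun ⟨v, hv, h⟩ ↦ ?_⟩
  · obtain ⟨v, hv⟩ := h.exists_hasEigenvector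
    exact ⟨v, hv.2, hv.apply_eq_smul⟩
  · exact Module.End.hasEigenvalue_of_hasEigenvector
      ⟨Module.End.mem_eigenspace_iff.2 h, hv⟩

end Conjugation

section Scalar

variable {n R : Type*} [Fintype n] [DecidableEq n] [CommRing R]

theorem notMem_range_scalar_of_apply_ne_zero {A : Matrix n n R} {i j : n} (hij : i ≠ j)
    (h : A i j ≠ 0) : A ∉ Set.range (scalar n) := by
  rintro ⟨r, rfl⟩
  exact h (diagonal_apply_ne _ hij)

theorem notMem_range_scalar_of_diag_ne {A : Matrix n n R} {i j : n} (h : A i i ≠ A j j) :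
    A ∉ Set.range (scalar n) := by
  rintro ⟨r, rfl⟩
  simp at h

theorem notMem_range_scalar_of_mul_eq_one {A B : Matrix n n R} (h : A * B = 1)
    (hA : A ∉ Set.range (scalar n)) : B ∉ Set.range (scalar n) := by
  rw [← center_eq_range] at hA ⊢
  exact fun hB ↦ hA (Set.units_inv_mem_center (a := ⟨B, A, mul_eq_one_comm.1 h, h⟩) hB)

end Scalar

section FinTwo

variable {R : Type*} [CommRing R]

/-- The companion matrix of `X ^ 2 - t * X + δ`. -/
def companionFinTwo (t δ : R) : Matrix (Fin 2) (Fin 2) R :=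
  !![0, -δ; 1, t]

/-- The matrix with columns `v` and `B *ᵥ v`, whose inverse changes the standard basis of `R²` to
the basis `v, B *ᵥ v` when the latter is one. -/
def krylovMatrix (B : Matrix (Fin 2) (Fin 2) R) (v : Fin 2 → R) : Matrix (Fin 2) (Fin 2) R :=
  (of ![v, B *ᵥ v])ᵀ

theorem sq_eq_trace_smul_sub_det_smul_one (B : Matrix (Fin 2) (Fin 2) R) :
    B * B = B.trace • B - B.det • 1 := by
  ext i j
  fin_cases i <;> fin_cases j <;> simp [trace_fin_two, det_fin_two, mul_apply] <;> ring

/-- The polarization of the Cayley–Hamilton identity. -/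
theorem mul_add_mul_swap_eq (A B : Matrix (Fin 2) (Fin 2) R) :
    A * B + B * A = A.trace • B + B.trace • A + ((A * B).trace - A.trace * B.trace) • 1 := by
  ext i j
  fin_cases i <;> fin_cases j <;> simp [trace_fin_two, mul_apply] <;> ring

theorem mul_transpose_of_pair (A : Matrix (Fin 2) (Fin 2) R) (v w : Fin 2 → R) :
    A * (of ![v, w])ᵀ = (of ![A *ᵥ v, A *ᵥ w])ᵀ := by
  ext i j
  fin_cases j <;> rfl

theorem transpose_of_pair_mulVec (v w c : Fin 2 → R) :
    (of ![v, w])ᵀ *ᵥ c = c 0 • v + c 1 • w := by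
  ext i
  simp [mulVec, dotProduct, Fin.sum_univ_two, mul_comm]

theorem semiconjBy_transpose_of_pair {A : Matrix (Fin 2) (Fin 2) R} {v w : Fin 2 → R} {p q r s : R}
    (hv : A *ᵥ v = p • v + r • w) (hw : A *ᵥ w = q • v + s • w) :
    SemiconjBy (of ![v, w])ᵀ !![p, q; r, s] A := by
  rw [SemiconjBy, mul_transpose_of_pair, hv, hw]
  ext i j
  fin_cases j <;> simp [mul_apply, mul_comm]

theorem semiconjBy_krylovMatrix_companionFinTwo (B : Matrix (Fin 2) (Fin 2) R) (v : Fin 2 → R) :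
    SemiconjBy (krylovMatrix B v) (companionFinTwo B.trace B.det) B := by
  refine semiconjBy_transpose_of_pair (by simp) ?_
  rw [mulVec_mulVec, sq_eq_trace_smul_sub_det_smul_one, sub_mulVec, smul_mulVec, smul_mulVec,
    one_mulVec]
  module

/-- The matrix, with eigenvalues `a` and `b`, whose product with `companionFinTwo t δ` has
trace `s`. -/
def triangularFinTwo (a b t s : R) : Matrix (Fin 2) (Fin 2) R :=
  !![a, s - b * t; 0, b]

theorem not_commute_triangularFinTwo_companionFinTwo {a b : R} (hab : a ≠ b) (t δ s : R) :
    ¬ Commute (triangularFinTwo a b t s) (companionFinTwo t δ) := by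
  intro h
  have h₁₀ := congrFun₂ h.eq 1 0
  simp [triangularFinTwo, companionFinTwo, mul_apply, hab.symm] at h₁₀

theorem triangularFinTwo_mul_companionFinTwo (a b t δ s : R) :
    triangularFinTwo a b t s * companionFinTwo t δ =
      !![s - b * t, (s - b * t) * t - a * δ; b, b * t] := by
  ext i j
  fin_cases i <;> fin_cases j <;> simp [triangularFinTwo, companionFinTwo, mul_apply]
  ring

theorem semiconjBy_krylovMatrix_triangularFinTwo {A : Matrix (Fin 2) (Fin 2) R} {v : Fin 2 → R}
    {a : R} (hv : A *ᵥ v = a • v) (B : Matrix (Fin 2) (Fin 2) R) :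
    SemiconjBy (krylovMatrix B v) (triangularFinTwo a (A.trace - a) B.trace (A * B).trace) A := by
  refine semiconjBy_transpose_of_pair (by simp [hv]) ?_
  have h := congrArg (· *ᵥ v) (mul_add_mul_swap_eq A B)
  simp only [add_mulVec, smul_mulVec, one_mulVec, ← mulVec_mulVec, hv, mulVec_smul] at h
  rw [eq_sub_of_add_eq h]
  module

theorem det_mul_trace_eq_of_mul_eq_one {A B : Matrix (Fin 2) (Fin 2) R} (h : A * B = 1) :
    A.det * B.trace = A.trace := by
  have hadj : A.adjugate = A.det • B := by
    rw [← mul_one A.adjugate, ← h, ← mul_assoc, adjugate_mul, smul_mul_assoc, one_mul]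
  rw [← smul_eq_mul, ← trace_smul, ← hadj, adjugate_fin_two, trace_fin_two_of, trace_fin_two,
    add_comm]

section Field

variable {F : Type*} [Field F]

theorem exists_forall_mulVec_ne_smul {B : Matrix (Fin 2) (Fin 2) F}
    (hB : B ∉ Set.range (scalar (Fin 2))) : ∃ v, ∀ μ : F, B *ᵥ v ≠ μ • v := by
  contrapose! hB
  have hdep (v : Fin 2 → F) : ¬ LinearIndependent F ![v, B.toLin' v] := by
    obtain ⟨μ, hμ⟩ := hB v
    intro h
    have hcoeff := LinearIndependent.pair_iff.1 h μ (-1) (by simp [hμ])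
    simp at hcoeff
  obtain ⟨μ, hμ⟩ := LinearMap.exists_eq_smul_id_of_forall_notLinearIndependent hdep
  refine ⟨μ, toLin'.injective ?_⟩
  rw [hμ, scalar_apply, ← smul_one_eq_diagonal, map_smul, toLin'_one]
  rfl

theorem isUnit_krylovMatrix {B : Matrix (Fin 2) (Fin 2) F} {v : Fin 2 → F}
    (h : ∀ μ : F, B *ᵥ v ≠ μ • v) : IsUnit (krylovMatrix B v) := by
  have hv : v ≠ 0 := by
    rintro rfl
    exact h 0 (by simp)
  rw [krylovMatrix, isUnit_transpose, ← linearIndependent_rows_iff_isUnit]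
  exact (LinearIndependent.pair_iff' hv).2 fun μ hμ ↦ h μ hμ.symm

theorem exists_eq_smul_one_add_smul_of_commute {A X : Matrix (Fin 2) (Fin 2) F}
    (hX : X ∉ Set.range (scalar (Fin 2))) (hA : Commute A X) : ∃ p r : F, A = p • 1 + r • X := by
  obtain ⟨v, hv⟩ := exists_forall_mulVec_ne_smul hX
  have hK := isUnit_krylovMatrix hv
  obtain ⟨c, hc⟩ := mulVec_surjective_iff_isUnit.2 hK (A *ᵥ v)
  have hAv : A *ᵥ v = (c 0 • 1 + c 1 • X) *ᵥ v := by
    rw [← hc, krylovMatrix, transpose_of_pair_mulVec, add_mulVec, smul_mulVec, smul_mulVec,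
      one_mulVec]
  have hcomm : Commute (c 0 • 1 + c 1 • X) X :=
    ((Commute.one_left X).smul_left _).add_left ((Commute.refl X).smul_left _)
  refine ⟨c 0, c 1, hK.mul_left_injective ?_⟩
  simp only [krylovMatrix, mul_transpose_of_pair]
  rw [mulVec_mulVec, mulVec_mulVec, hA.eq, hcomm.eq, ← mulVec_mulVec, ← mulVec_mulVec, hAv]

theorem commute_of_commute_nonscalar {A B X : Matrix (Fin 2) (Fin 2) F}
    (hX : X ∉ Set.range (scalar (Fin 2))) (hA : Commute A X) (hB : Commute B X) :
    Commute A B := by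
  obtain ⟨p, r, rfl⟩ := exists_eq_smul_one_add_smul_of_commute hX hA
  exact ((Commute.one_left B).smul_left p).add_left (hB.symm.smul_left r)

theorem isConj_companionFinTwo {B : Matrix (Fin 2) (Fin 2) F}
    (hB : B ∉ Set.range (scalar (Fin 2))) : IsConj (companionFinTwo B.trace B.det) B := by
  obtain ⟨v, hv⟩ := exists_forall_mulVec_ne_smul hB
  exact ⟨(isUnit_krylovMatrix hv).unit, semiconjBy_krylovMatrix_companionFinTwo B v⟩

theorem isConj_of_trace_eq_of_det_eq {A B : Matrix (Fin 2) (Fin 2) F}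
    (hA : A ∉ Set.range (scalar (Fin 2))) (hB : B ∉ Set.range (scalar (Fin 2)))
    (htrace : A.trace = B.trace) (hdet : A.det = B.det) : IsConj A B := by
  have h := isConj_companionFinTwo hA
  rw [htrace, hdet] at h
  exact h.symm.trans (isConj_companionFinTwo hB)

theorem isConj_of_mul_eq_one {A B C : Matrix (Fin 2) (Fin 2) F} (h : A * B = 1)
    (hA : A ∉ Set.range (scalar (Fin 2))) (hC : C ∉ Set.range (scalar (Fin 2)))
    (htrace : A.det * C.trace = A.trace) (hdet : A.det * C.det = 1) : IsConj C B := by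
  have hA₀ : A.det ≠ 0 := left_ne_zero_of_mul_eq_one hdet
  refine isConj_of_trace_eq_of_det_eq hC (notMem_range_scalar_of_mul_eq_one h hA)
    (mul_left_cancel₀ hA₀ ?_) (mul_left_cancel₀ hA₀ ?_)
  · rw [htrace, det_mul_trace_eq_of_mul_eq_one h]
  · rw [hdet, ← det_mul, h, det_one]

theorem spectrum_upperTriangular_fin_two (a b d : F) : spectrum F !![a, b; 0, d] = {a, d} := by
  ext μ
  have h : (!![a, b; 0, d].charpoly).eval μ = (μ - a) * (μ - d) := by
    rw [charpoly_fin_two, trace_fin_two_of, det_fin_two_of]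
    simp only [Polynomial.eval_add, Polynomial.eval_sub, Polynomial.eval_mul, Polynomial.eval_pow,
      Polynomial.eval_X, Polynomial.eval_C]
    ring
  rw [mem_spectrum_iff_isRoot_charpoly, Polynomial.IsRoot, h, mul_eq_zero, sub_eq_zero,
    sub_eq_zero, Set.mem_insert_iff, Set.mem_singleton_iff]

theorem stabilizer_eq_map_center {x : Matrix (Fin 2) (Fin 2) F × Matrix (Fin 2) (Fin 2) F ×
    Matrix (Fin 2) (Fin 2) F} (hx : ¬ Commute x.1 x.2.1) :
    stabilizer (ConjAct (GL (Fin 2) F)) x =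
      (Subgroup.center (GL (Fin 2) F)).map
        (ConjAct.toConjAct (G := GL (Fin 2) F)).toMonoidHom := by
  ext g
  rw [mem_stabilizer_iff, Subgroup.mem_map_equiv,
    GeneralLinearGroup.mem_center_iff_val_mem_range_scalar]
  refine ⟨fun h ↦ ?_, fun h ↦ ?_⟩
  · by_contra hg
    exact hx (commute_of_commute_nonscalar hg
      (conjAct_smul_eq_iff_semiconjBy.1 (congrArg Prod.fst h)).symm
      (conjAct_smul_eq_iff_semiconjBy.1 (congrArg (·.2.1) h)).symm)
  · rw [← center_eq_range, Semigroup.mem_center_iff] at h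
    exact Prod.ext (conjAct_smul_eq_iff_semiconjBy.2 (h _).symm)
      (Prod.ext (conjAct_smul_eq_iff_semiconjBy.2 (h _).symm)
      (conjAct_smul_eq_iff_semiconjBy.2 (h _).symm))

end Field

end FinTwo

section Count

theorem card_center_GL (n R : Type*) [Fintype n] [DecidableEq n] [Nonempty n] [CommRing R] :
    Nat.card (Subgroup.center (GL n R)) = Nat.card Rˣ := by
  rw [GeneralLinearGroup.center_eq_range_scalar]
  refine (Nat.card_congr (MonoidHom.ofInjective fun u v h ↦ ?_).toEquiv).symm
  exact Units.ext (scalar_inj.1 (congrArg Units.val h))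

theorem index_center_GL_fin_two (F : Type*) [Field F] [Finite F] :
    ((Subgroup.center (GL (Fin 2) F)).index : ℤ) = (Nat.card F : ℤ) ^ 3 - Nat.card F := by
  have := Fintype.ofFinite F
  have hq : 1 < Nat.card F := Finite.one_lt_card
  have h := (Subgroup.center (GL (Fin 2) F)).index_mul_card
  rw [card_center_GL, Nat.card_units, card_GL_field, Fin.prod_univ_two,
    ← Nat.card_eq_fintype_card] at h
  simp only [Fin.val_zero, Fin.val_one, pow_zero, pow_one] at h
  zify [hq.le, Nat.one_le_pow 2 _ (zero_lt_one.trans hq),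
    Nat.le_self_pow two_ne_zero (Nat.card F)] at h
  apply mul_right_cancel₀ (sub_ne_zero.2 (by exact_mod_cast hq.ne' : (Nat.card F : ℤ) ≠ 1))
  linear_combination h

end Count

section Generic

variable {F : Type*} [Field F]

theorem mulVec_ne_smul_of_mem_productOneTriples {n : Type*} [Fintype n] [DecidableEq n]
    {A B C : Matrix n n F} {x : Matrix n n F × Matrix n n F × Matrix n n F}
    (hx : x ∈ productOneTriples A B C) {a : F}
    (hgen : ∀ μ ∈ spectrum F B, ∀ ν ∈ spectrum F C, a * μ * ν ≠ 1) {v : n → F} (hv : v ≠ 0)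
    (hav : x.1 *ᵥ v = a • v) (μ : F) : x.2.1 *ᵥ v ≠ μ • v := by
  obtain ⟨-, hB, hC, hprod⟩ := hx
  intro hμv
  have hν : (a * μ) • x.2.2 *ᵥ v = v := by
    rw [← mulVec_smul, mul_comm, mul_smul, ← hav, ← mulVec_smul, ← hμv, mulVec_mulVec v x.1,
      mulVec_mulVec, mul_eq_one_comm.1 hprod, one_mulVec]
  have haμ : a * μ ≠ 0 := by
    intro h
    rw [h, zero_smul] at hν
    exact hv hν.symm
  refine hgen μ ?_ (a * μ)⁻¹ ?_ (mul_inv_cancel₀ haμ)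
  · rw [spectrum_eq_of_isConj hB]
    exact mem_spectrum_iff_exists_mulVec_eq_smul.2 ⟨v, hv, hμv⟩
  · rw [spectrum_eq_of_isConj hC]
    exact mem_spectrum_iff_exists_mulVec_eq_smul.2 ⟨v, hv, (eq_inv_smul_iff₀ haμ).2 hν⟩

/-- The representative of the orbit of triples `(A, B, C)` with product `1` such that `A` has
eigenvalues `a` and `b`, the characteristic polynomial of `B` is `X ^ 2 - t * X + δ`, and `A * B`
has trace `s`, in the basis `v, B *ᵥ v` for an eigenvector `v` of `A` with eigenvalue `a`. -/
noncomputable def normalTriple (a b t δ s : F) :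
    Matrix (Fin 2) (Fin 2) F × Matrix (Fin 2) (Fin 2) F × Matrix (Fin 2) (Fin 2) F :=
  (triangularFinTwo a b t s, companionFinTwo t δ,
    (triangularFinTwo a b t s * companionFinTwo t δ)⁻¹)

theorem isConj_diagonal_triangularFinTwo {a b : F} (hab : a ≠ b) (t s : F) :
    IsConj (diagonal ![a, b]) (triangularFinTwo a b t s) := by
  refine isConj_of_trace_eq_of_det_eq
    (notMem_range_scalar_of_diag_ne (i := 0) (j := 1) hab)
    (notMem_range_scalar_of_diag_ne (i := 0) (j := 1) hab) ?_ ?_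
  · simp [triangularFinTwo, trace_fin_two]
  · simp [triangularFinTwo, det_fin_two]

variable {a b : F} {B C : Matrix (Fin 2) (Fin 2) F}

theorem normalTriple_mem_productOneTriples (hab : a ≠ b) (hB : B ∉ Set.range (scalar (Fin 2)))
    (hC : C ∉ Set.range (scalar (Fin 2))) (hdet : a * b * B.det * C.det = 1) :
    normalTriple a b B.trace B.det (a * b * B.det * C.trace) ∈
      productOneTriples (diagonal ![a, b]) B C := by
  set s := a * b * B.det * C.trace
  set P := triangularFinTwo a b B.trace s * companionFinTwo B.trace B.det
  have hP : P = !![s - b * B.trace, (s - b * B.trace) * B.trace - a * B.det; b, b * B.trace] :=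
    triangularFinTwo_mul_companionFinTwo ..
  have hPdet : P.det = a * b * B.det := by
    rw [hP, det_fin_two_of]
    ring
  have hPtrace : P.trace = s := by
    rw [hP, trace_fin_two_of, sub_add_cancel]
  have hPinv : P * P⁻¹ = 1 :=
    mul_nonsing_inv P (IsUnit.of_mul_eq_one C.det (by rw [hPdet, hdet]))
  have hP₁₀ : P 1 0 ≠ 0 := by
    have hb : b ≠ 0 := by
      rintro rfl
      simp at hdet
    rwa [hP]
  refine ⟨isConj_diagonal_triangularFinTwo hab _ _, (isConj_companionFinTwo hB).symm, ?_, hPinv⟩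
  refine isConj_of_mul_eq_one hPinv (notMem_range_scalar_of_apply_ne_zero one_ne_zero hP₁₀) hC
    ?_ ?_
  · rw [hPdet, hPtrace]
  · rw [hPdet, hdet]

theorem productOneTriples_eq_orbit (hab : a ≠ b) (hB : B ∉ Set.range (scalar (Fin 2)))
    (hC : C ∉ Set.range (scalar (Fin 2))) (hdet : a * b * B.det * C.det = 1)
    (hgen : ∀ μ ∈ spectrum F B, ∀ ν ∈ spectrum F C, a * μ * ν ≠ 1) :
    productOneTriples (diagonal ![a, b]) B C = orbit (ConjAct (GL (Fin 2) F))
      (normalTriple a b B.trace B.det (a * b * B.det * C.trace)) := by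
  have hnormal := normalTriple_mem_productOneTriples hab hB hC hdet
  refine Set.Subset.antisymm (fun x hx ↦ ?_) ?_
  · have ⟨hA', hB', hC', hprod⟩ := hx
    have ha : a ∈ spectrum F x.1 := by
      rw [← spectrum_eq_of_isConj hA', spectrum_diagonal]
      exact ⟨0, rfl⟩
    obtain ⟨v, hv, hav⟩ := mem_spectrum_iff_exists_mulVec_eq_smul.1 ha
    have hK := isUnit_krylovMatrix (mulVec_ne_smul_of_mem_productOneTriples hx hgen hv hav)
    have htrace : (x.1 * x.2.1).trace = a * b * B.det * C.trace := by
      rw [← det_mul_trace_eq_of_mul_eq_one hprod, det_mul, ← det_eq_of_isConj hA',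
        ← det_eq_of_isConj hB', ← trace_eq_of_isConj hC']
      simp
    have hb : x.1.trace - a = b := by
      rw [← trace_eq_of_isConj hA']
      simp
    have hfst := semiconjBy_krylovMatrix_triangularFinTwo hav x.2.1
    have hsnd := semiconjBy_krylovMatrix_companionFinTwo x.2.1 v
    rw [hb, htrace, ← trace_eq_of_isConj hB'] at hfst
    rw [← trace_eq_of_isConj hB', ← det_eq_of_isConj hB'] at hsnd
    refine ⟨ConjAct.toConjAct hK.unit, productOneTriples_ext
      (conjAct_smul_mem_productOneTriples _ hnormal) hx ?_ ?_⟩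
    · exact conjAct_smul_eq_iff_semiconjBy.2 hfst
    · exact conjAct_smul_eq_iff_semiconjBy.2 hsnd
  · rintro _ ⟨g, rfl⟩
    exact conjAct_smul_mem_productOneTriples g hnormal

end Generic

theorem GL2_triple_count_generic_general {F : Type*} [Field F] [Finite F] {a b : F} (hab : a ≠ b)
    {B C : Matrix (Fin 2) (Fin 2) F} (hB : B ∉ Set.range (scalar (Fin 2)))
    (hC : C ∉ Set.range (scalar (Fin 2))) (hdet : a * b * B.det * C.det = 1)
    (hgen : ∀ μ ∈ spectrum F B, ∀ ν ∈ spectrum F C, a * μ * ν ≠ 1) :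
    (Nat.card (productOneTriples (diagonal ![a, b]) B C) : ℤ) =
      (Nat.card F : ℤ) ^ 3 - Nat.card F := by
  rw [productOneTriples_eq_orbit hab hB hC hdet hgen, Nat.card_coe_set_eq, ← index_stabilizer,
    stabilizer_eq_map_center (not_commute_triangularFinTwo_companionFinTwo hab _ _ _),
    ← index_center_GL_fin_two]
  exact congrArg Nat.cast (Subgroup.index_map_equiv _ ConjAct.toConjAct)

/-- Genus 0, three punctures, `GL₂`, generic case: with `C₁, C₂` the classes of `diag(a,b)`,
`diag(c,d)` (with `abcd = 1` and `ac, ad, bc, bd ≠ 1`) and `C₃` the regular unipotent class,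
the number of triples `(S₁,S₂,S₃) ∈ C₁ × C₂ × C₃` with `S₁S₂S₃ = 1` is `q³ - q`. -/
theorem GL2_triple_count_generic
    {F : Type*} [Field F] [Fintype F] (hchar : ringChar F ≠ 2)
    (q : ℕ) (hq : q = Fintype.card F)
    (a b c d : F) (ha0 : a ≠ 0) (hb0 : b ≠ 0) (hc0 : c ≠ 0) (hd0 : d ≠ 0)
    (hab : a ≠ b) (hcd : c ≠ d) (habcd : a * b * c * d = 1)
    (hac : a * c ≠ 1) (had : a * d ≠ 1) (hbc : b * c ≠ 1) (hbd : b * d ≠ 1) :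
    (Nat.card {x : Matrix (Fin 2) (Fin 2) F × Matrix (Fin 2) (Fin 2) F ×
        Matrix (Fin 2) (Fin 2) F //
        IsConj (Matrix.diagonal ![a, b]) x.1 ∧
        IsConj (Matrix.diagonal ![c, d]) x.2.1 ∧
        IsConj (!![1, 1; 0, 1] : Matrix (Fin 2) (Fin 2) F) x.2.2 ∧
        x.1 * x.2.1 * x.2.2 = 1} : ℤ) = (q : ℤ) ^ 3 - q := by
  have hB := notMem_range_scalar_of_diag_ne (A := diagonal ![c, d]) (i := 0) (j := 1) hcd
  have hC : !![1, 1; 0, 1] ∉ Set.range (scalar (Fin 2) (α := F)) :=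
    notMem_range_scalar_of_apply_ne_zero (i := 0) (j := 1) zero_ne_one one_ne_zero
  rw [hq, ← Nat.card_eq_fintype_card]
  refine GL2_triple_count_generic_general hab hB hC ?_ ?_
  · rw [det_diagonal, Fin.prod_univ_two, det_fin_two_of]
    simpa [← mul_assoc] using habcd
  · rw [spectrum_diagonal, spectrum_upperTriangular_fin_two]
    simp [hac, had]
end

section
/- Let F be a finite field with q elements of odd characteristic and let a, b, t ∈ Fˣ satisfy a ∉ {1, −1}, b ∉ {1, −1}, ab = t², ab ≠ 1, and a ≠ b. In PGL₂(F) := GL₂(F)/{scalar matrices}, let C₁, C₂ be the conjugacy classes of the images of diag(a,1) and diag(b,1), and let C₃ be the conjugacy class of the image of [[1,1],[0,1]]. Then the number of triples (x₁, x₂, x₃) ∈ C₁ × C₂ × C₃ with x₁x₂x₃ = 1 equals 2(q³ − q); equivalently, such triples form exactly two orbits under simultaneous conjugation by PGL₂(F). -/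
/-!
Conjugating `x₁` to the image of `diag(a, 1)`, whose centralizer in `PGL₂` is the diagonal torus
because `a ≠ ±1`, leaves the pairs `(diag(a, 1), B)` with `B` lifted to trace `b + 1` and
determinant `b`. The product `x₁ x₂` is then in the class of the unipotent exactly when
`diag(a, 1) B`, which is not scalar, has a double eigenvalue `s`, so that `s ^ 2 = a b` and the
trace is `2 s`. Since `a ≠ b` and `a b ≠ 1`, such a `B` has no zero off the diagonal. For a given
`s` it is therefore determined by its upper right entry, on which the torus `diag(u, 1)` acts
simply transitively. So `PGL₂` acts freely on the triples, over any field, with one orbit for each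
square root `s` of `a b`.
-/

section MonodromyTriples

open ConjAct

variable {G : Type*} [Group G]

/-- The triples `(x₁, x₂, x₃)` in the classes of `c₁`, `c₂`, `c₃` with `x₁ x₂ x₃ = 1`, i.e. the
representations into `G` of the fundamental group of the sphere with three punctures whose local
monodromies are conjugate to `c₁`, `c₂`, `c₃`. -/
def monodromyTriples (c₁ c₂ c₃ : G) : Set (G × G × G) :=
  {x | IsConj c₁ x.1 ∧ IsConj c₂ x.2.1 ∧ IsConj c₃ x.2.2 ∧ x.1 * x.2.1 * x.2.2 = 1}

/-- The entries `y` of the triples `(c₁, y, z)` in `monodromyTriples c₁ c₂ c₃`. -/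
def monodromyFibre (c₁ c₂ c₃ : G) : Set G :=
  {y | IsConj c₂ y ∧ IsConj c₃ (c₁ * y)⁻¹}

/-- The triple with product `1` whose first two entries are prescribed. -/
def tripleOfPair (x y : G) : G × G × G := (x, y, (x * y)⁻¹)

theorem smul_tripleOfPair (g : ConjAct G) (x y : G) :
    g • tripleOfPair x y = tripleOfPair (g • x) (g • y) := by
  simp only [tripleOfPair, Prod.smul_mk, smul_inv', smul_mul']

variable {c₁ c₂ c₃ : G}

theorem tripleOfPair_mem_monodromyTriples {y : G} :
    tripleOfPair c₁ y ∈ monodromyTriples c₁ c₂ c₃ ↔ y ∈ monodromyFibre c₁ c₂ c₃ :=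
  ⟨fun h => ⟨h.2.1, h.2.2.1⟩, fun h => ⟨IsConj.refl _, h.1, h.2, mul_inv_cancel _⟩⟩

theorem eq_tripleOfPair {x : G × G × G} (hx : x ∈ monodromyTriples c₁ c₂ c₃) :
    x = tripleOfPair x.1 x.2.1 :=
  Prod.ext rfl (Prod.ext rfl (eq_inv_of_mul_eq_one_right hx.2.2.2))

theorem isConj_smul (g : ConjAct G) (x : G) : IsConj x (g • x) :=
  isConj_iff.2 ⟨ofConjAct g, rfl⟩

theorem smul_mem_monodromyTriples (g : ConjAct G) {x : G × G × G}
    (hx : x ∈ monodromyTriples c₁ c₂ c₃) : g • x ∈ monodromyTriples c₁ c₂ c₃ := by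
  obtain ⟨h₁, h₂, h₃, h⟩ := hx
  refine ⟨h₁.trans (isConj_smul g _), h₂.trans (isConj_smul g _), h₃.trans (isConj_smul g _), ?_⟩
  simp only [Prod.smul_fst, Prod.smul_snd, ← smul_mul', h, smul_one]

theorem toConjAct_smul_eq_self_iff {g c : G} :
    toConjAct g • c = c ↔ g ∈ Subgroup.centralizer {c} := by
  rw [toConjAct_smul, mul_inv_eq_iff_eq_mul, Subgroup.mem_centralizer_singleton_iff]

theorem injective_smul_tripleOfPair {ι H : Type*} [Group H] (τ : H →* G)
    (hτ : τ.range = Subgroup.centralizer {c₁}) (β : ι → G)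
    (hβ : Function.Injective fun p : ι × H => toConjAct (τ p.2) • β p.1) :
    Function.Injective fun p : ι × G => toConjAct p.2 • tripleOfPair c₁ (β p.1) := by
  rintro ⟨i, g⟩ ⟨j, g'⟩ h
  have heq : tripleOfPair (toConjAct (g'⁻¹ * g) • c₁) (toConjAct (g'⁻¹ * g) • β i) =
      tripleOfPair c₁ (β j) := by
    rwa [← smul_tripleOfPair, map_mul, mul_smul, map_inv, inv_smul_eq_iff]
  obtain ⟨k, hk⟩ : g'⁻¹ * g ∈ τ.range := by
    rw [hτ, ← toConjAct_smul_eq_self_iff]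
    exact congrArg Prod.fst heq
  have hβij : toConjAct (τ k) • β i = toConjAct (τ 1) • β j := by
    rw [hk, map_one τ, map_one, one_smul]
    exact congrArg (fun x => x.2.1) heq
  obtain ⟨rfl, rfl⟩ := Prod.mk_inj.1 (@hβ (i, k) (j, 1) hβij)
  rw [map_one, eq_comm, inv_mul_eq_one] at hk
  rw [hk]

theorem exists_smul_tripleOfPair_eq {ι H : Type*} [Group H] (τ : H →* G)
    (hτ : τ.range = Subgroup.centralizer {c₁}) (β : ι → G)
    (hβ : Set.SurjOn (fun p : ι × H => toConjAct (τ p.2) • β p.1)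
      Set.univ (monodromyFibre c₁ c₂ c₃))
    {x : G × G × G} (hx : x ∈ monodromyTriples c₁ c₂ c₃) :
    ∃ p : ι × G, toConjAct p.2 • tripleOfPair c₁ (β p.1) = x := by
  obtain ⟨g, hg : toConjAct g • c₁ = x.1⟩ := isConj_iff.1 hx.1
  have hfib : tripleOfPair c₁ ((toConjAct g)⁻¹ • x.2.1) = (toConjAct g)⁻¹ • x := by
    rw [eq_tripleOfPair hx, smul_tripleOfPair, ← hg, inv_smul_smul]
    rfl
  obtain ⟨⟨i, k⟩, -, hik⟩ := hβ
    (tripleOfPair_mem_monodromyTriples.1 (hfib ▸ smul_mem_monodromyTriples _ hx))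
  have hk : toConjAct (τ k) • c₁ = c₁ := toConjAct_smul_eq_self_iff.2 (hτ ▸ ⟨k, rfl⟩)
  refine ⟨(i, g * τ k), ?_⟩
  simp only at hik ⊢
  rw [map_mul, mul_smul, smul_tripleOfPair, hk, hik, hfib, smul_inv_smul]

-- Conjugating `x₁` to `c₁` reduces to the pairs `(c₁, y)`, on which only the centralizer of `c₁`
-- still acts; by hypothesis it acts freely, with the `β i` representing its orbits.
theorem exists_equiv_monodromyTriples {ι H : Type*} [Group H] (τ : H →* G)
    (hτ : τ.range = Subgroup.centralizer {c₁}) (β : ι → G)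
    (hβ : Set.BijOn (fun p : ι × H => toConjAct (τ p.2) • β p.1)
      Set.univ (monodromyFibre c₁ c₂ c₃)) :
    ∃ e : ι × G ≃ monodromyTriples c₁ c₂ c₃,
      ∀ i g, (e (i, g)).val = toConjAct g • (e (i, 1)).val := by
  have hmem (i : ι) : tripleOfPair c₁ (β i) ∈ monodromyTriples c₁ c₂ c₃ :=
    tripleOfPair_mem_monodromyTriples.2 (by simpa using hβ.mapsTo (Set.mem_univ (i, 1)))
  let f (p : ι × G) : monodromyTriples c₁ c₂ c₃ :=
    ⟨toConjAct p.2 • tripleOfPair c₁ (β p.1), smul_mem_monodromyTriples _ (hmem p.1)⟩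
  have hf : Function.Bijective f :=
    ⟨fun _ _ h => injective_smul_tripleOfPair τ hτ β (Set.injOn_univ.1 hβ.injOn)
        (congrArg Subtype.val h),
      fun x => (exists_smul_tripleOfPair_eq τ hτ β hβ.surjOn x.2).imp fun _ => Subtype.ext⟩
  refine ⟨Equiv.ofBijective f hf, fun i g => ?_⟩
  change toConjAct g • tripleOfPair c₁ (β i) =
    toConjAct g • toConjAct (1 : G) • tripleOfPair c₁ (β i)
  rw [map_one, one_smul]

end MonodromyTriples

section GL2

open Matrix Matrix.GeneralLinearGroup
open scoped MatrixGroups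

variable {n R F : Type*} [Fintype n] [DecidableEq n] [CommRing R] [Field F]

theorem mem_center_iff_fin_two {g : GL (Fin 2) R} :
    g ∈ Subgroup.center (GL (Fin 2) R) ↔
      g.val 0 1 = 0 ∧ g.val 1 0 = 0 ∧ g.val 0 0 = g.val 1 1 := by
  rw [mem_center_iff_val_mem_range_scalar]
  constructor
  · rintro ⟨c, hc⟩
    simp [← hc]
  · rintro ⟨h₀₁, h₁₀, h⟩
    exact ⟨g.val 1 1, by ext i j; fin_cases i <;> fin_cases j <;> simp [h₀₁, h₁₀, h]⟩

-- The columns of `P` are a cyclic vector `v` and `g v`.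
theorem exists_mul_eq_mul_companion {g : GL (Fin 2) F} (hg : g ∉ Subgroup.center (GL (Fin 2) F)) :
    ∃ P : GL (Fin 2) F, g.val * P.val = P.val * !![0, -g.val.det; 1, g.val.trace] := by
  obtain ⟨x, y, hxy⟩ : ∃ x y : F,
      x * (g.val 1 0 * x + g.val 1 1 * y) - (g.val 0 0 * x + g.val 0 1 * y) * y ≠ 0 := by
    by_contra! h
    have h₁₀ : g.val 1 0 = 0 := by simpa using h 1 0
    have h₀₁ : g.val 0 1 = 0 := by simpa using h 0 1
    exact hg (mem_center_iff_fin_two.2 ⟨h₀₁, h₁₀, by linear_combination h₁₀ - h₀₁ - h 1 1⟩)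
  refine ⟨mkOfDetNeZero !![x, g.val 0 0 * x + g.val 0 1 * y; y, g.val 1 0 * x + g.val 1 1 * y]
    (by rwa [det_fin_two_of]), ?_⟩
  ext i j
  fin_cases i <;> fin_cases j <;>
    simp [mkOfDetNeZero, mul_apply, Fin.sum_univ_two, det_fin_two, trace_fin_two] <;> ring

theorem isConj_iff_trace_eq_and_det_eq {g h : GL (Fin 2) F}
    (hg : g ∉ Subgroup.center (GL (Fin 2) F)) (hh : h ∉ Subgroup.center (GL (Fin 2) F)) :
    IsConj g h ↔ h.val.trace = g.val.trace ∧ h.val.det = g.val.det := by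
  constructor
  · rw [isConj_iff]
    rintro ⟨k, rfl⟩
    exact ⟨trace_units_conj k g.val, det_units_conj k g.val⟩
  · rintro ⟨htr, hdet⟩
    obtain ⟨P, hP⟩ := exists_mul_eq_mul_companion hg
    obtain ⟨Q, hQ⟩ := exists_mul_eq_mul_companion hh
    rw [htr, hdet] at hQ
    have hconj : P⁻¹ * g * P = Q⁻¹ * h * Q := by
      ext1
      simp only [Units.val_mul, mul_assoc, hP, hQ, Units.inv_mul_cancel_left]
    refine isConj_iff.2 ⟨Q * P⁻¹, ?_⟩
    calc Q * P⁻¹ * g * (Q * P⁻¹)⁻¹ = Q * (P⁻¹ * g * P) * Q⁻¹ := by group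
      _ = h := by rw [hconj]; group

theorem trace_mul_scalar (g : GL n R) (c : Rˣ) :
    (g * scalar n c).val.trace = c * g.val.trace := by
  rw [Units.val_mul, coe_scalar, scalar_apply, ← smul_eq_mul_diagonal, trace_smul, smul_eq_mul]

theorem det_mul_scalar (g : GL n R) (c : Rˣ) :
    (g * scalar n c).val.det = c ^ Fintype.card n * g.val.det := by
  simp [mul_comm]

theorem trace_inv_fin_two (g : GL (Fin 2) F) : g⁻¹.val.trace = g.val.trace / g.val.det := by
  rw [coe_units_inv, inv_def, adjugate_fin_two, trace_smul, trace_fin_two_of, trace_fin_two,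
    Ring.inverse_eq_inv', smul_eq_mul, add_comm, inv_mul_eq_div]

theorem exists_isConj_and_mk_eq {g : GL n R} {y : ProjGenLinGroup n R}
    (h : IsConj (ProjGenLinGroup.mk g) y) :
    ∃ k, IsConj g k ∧ ProjGenLinGroup.mk k = y := by
  obtain ⟨x, rfl⟩ := isConj_iff.1 h
  obtain ⟨K, rfl⟩ := ProjGenLinGroup.mk_surjective x
  exact ⟨K * g * K⁻¹, isConj_iff.2 ⟨K, rfl⟩, by simp only [map_mul, map_inv]⟩

theorem isConj_mk_iff_exists {g : GL (Fin 2) F} (hg : g ∉ Subgroup.center (GL (Fin 2) F))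
    {y : PGL(2, F)} :
    IsConj (ProjGenLinGroup.mk g) y ↔
      ∃ h ∉ Subgroup.center (GL (Fin 2) F),
        h.val.trace = g.val.trace ∧ h.val.det = g.val.det ∧ ProjGenLinGroup.mk h = y := by
  constructor
  · intro hy
    obtain ⟨k, hk, rfl⟩ := exists_isConj_and_mk_eq hy
    have hkc : k ∉ Subgroup.center (GL (Fin 2) F) := fun hkc =>
      hg (by rwa [← hk.symm.eq_of_left_mem_center hkc])
    obtain ⟨htr, hdet⟩ := (isConj_iff_trace_eq_and_det_eq hg hkc).1 hk
    exact ⟨k, hkc, htr, hdet, rfl⟩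
  · rintro ⟨k, hkc, htr, hdet, rfl⟩
    exact ProjGenLinGroup.mk.map_isConj ((isConj_iff_trace_eq_and_det_eq hg hkc).2 ⟨htr, hdet⟩)

theorem isConj_mk_iff {g h : GL (Fin 2) F} (hg : g ∉ Subgroup.center (GL (Fin 2) F)) :
    IsConj (ProjGenLinGroup.mk g) (ProjGenLinGroup.mk h) ↔
      h ∉ Subgroup.center (GL (Fin 2) F) ∧
        ∃ c : Fˣ, h.val.trace = c * g.val.trace ∧ h.val.det = c ^ 2 * g.val.det := by
  have mul_scalar_mem (k : GL (Fin 2) F) (c : Fˣ) :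
      k * scalar (Fin 2) c ∈ Subgroup.center _ ↔ k ∈ Subgroup.center (GL (Fin 2) F) := by
    rw [← ProjGenLinGroup.mk_eq_one, map_mul, ProjGenLinGroup.mk_scalar, mul_one,
      ProjGenLinGroup.mk_eq_one]
  rw [isConj_mk_iff_exists hg]
  constructor
  · rintro ⟨k, hk, htr, hdet, hkh⟩
    obtain ⟨c, rfl⟩ := ProjGenLinGroup.mk_eq_mk_iff.1 hkh
    exact ⟨(mul_scalar_mem k c).not.2 hk, c, by rw [trace_mul_scalar, htr],
      by rw [det_mul_scalar, hdet, Fintype.card_fin]⟩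
  · rintro ⟨hh, c, htr, hdet⟩
    refine ⟨h * scalar (Fin 2) c⁻¹, (mul_scalar_mem h _).not.2 hh, ?_, ?_, ?_⟩
    · rw [trace_mul_scalar, htr, Units.inv_mul_cancel_left]
    · rw [det_mul_scalar, hdet, Fintype.card_fin, ← mul_assoc, ← mul_pow, Units.inv_mul, one_pow,
        one_mul]
    · rw [map_mul, ProjGenLinGroup.mk_scalar, mul_one]

theorem upperRightHom_notMem_center {x : R} (hx : x ≠ 0) :
    upperRightHom x ∉ Subgroup.center (GL (Fin 2) R) := by
  rw [mem_center_iff_fin_two]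
  simp [hx]

theorem isConj_mk_upperRightHom_inv_iff {h : GL (Fin 2) F} :
    IsConj (ProjGenLinGroup.mk (upperRightHom (1 : F))) (ProjGenLinGroup.mk h)⁻¹ ↔
      h ∉ Subgroup.center (GL (Fin 2) F) ∧ ∃ s : F, s ^ 2 = h.val.det ∧ h.val.trace = 2 * s := by
  have hdet : h.val.det ≠ 0 := h.det_ne_zero
  have htrJ : (upperRightHom (1 : F)).val.trace = 2 := by
    norm_num [trace_fin_two]
  have hdetJ : (upperRightHom (1 : F)).val.det = 1 := by
    simp [det_fin_two]
  rw [← map_inv, isConj_mk_iff (upperRightHom_notMem_center one_ne_zero), inv_mem_iff,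
    trace_inv_fin_two, coe_units_inv, det_nonsing_inv, Ring.inverse_eq_inv', htrJ, hdetJ]
  refine and_congr_right fun _ => ⟨?_, ?_⟩
  · rintro ⟨c, htr, hc⟩
    rw [mul_one, inv_eq_iff_eq_inv] at hc
    refine ⟨(c : F)⁻¹, by rw [hc, inv_pow], ?_⟩
    rw [div_eq_iff hdet, hc] at htr
    rw [htr]
    field_simp
  · rintro ⟨s, hs, htr⟩
    have hs0 : s ≠ 0 := by
      rintro rfl
      exact hdet (by rw [← hs, zero_pow two_ne_zero])
    refine ⟨(Units.mk0 s hs0)⁻¹, ?_, ?_⟩ <;> rw [← hs]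
    · rw [htr, Units.val_inv_eq_inv_val, Units.val_mk0]
      field_simp
    · simp

/-- The torus element `diag(u, 1)`, as a homomorphism in `u`. -/
def diagHom (R : Type*) [CommRing R] : Rˣ →* GL (Fin 2) R :=
  MonoidHom.toHomUnits
    { toFun u := diagonal ![(u : R), 1]
      map_one' := by ext i j; fin_cases i <;> fin_cases j <;> simp
      map_mul' u v := by ext i j; fin_cases i <;> fin_cases j <;> simp }

@[simp]
theorem coe_diagHom (u : Rˣ) :
    (diagHom R u : Matrix (Fin 2) (Fin 2) R) = diagonal ![(u : R), 1] := rfl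

-- A scalar `c ≠ 1` would force `K` to be antidiagonal and then `a = c = a⁻¹`.
theorem offDiag_eq_zero_of_mul_diagHom_eq {a : Fˣ} (ha : a ≠ 1) (ha' : a ≠ -1)
    {K : GL (Fin 2) F} {c : Fˣ}
    (h : K * diagHom F a * scalar (Fin 2) c = diagHom F a * K) :
    K.val 0 1 = 0 ∧ K.val 1 0 = 0 := by
  have hentry (i j : Fin 2) :
      (K * diagHom F a * scalar (Fin 2) c).val i j = (diagHom F a * K).val i j := by rw [h]
  have h₀₀ : K.val 0 0 * (c - 1) = 0 := by
    refine (mul_eq_zero.1 (?_ : (a : F) * (K.val 0 0 * (c - 1)) = 0)).resolve_left a.ne_zero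
    linear_combination (by simpa using hentry 0 0 : K.val 0 0 * a * c = a * K.val 0 0)
  have h₀₁ : K.val 0 1 * (c - a) = 0 := by
    linear_combination (by simpa using hentry 0 1 : K.val 0 1 * c = a * K.val 0 1)
  have h₁₀ : K.val 1 0 * (a * c - 1) = 0 := by
    linear_combination (by simpa using hentry 1 0 : K.val 1 0 * a * c = K.val 1 0)
  have ha1 : (1 - a : F) ≠ 0 := sub_ne_zero.2 fun h' => ha (Units.ext h'.symm)
  obtain rfl : c = 1 := by
    by_contra hc
    have hc1 : (c - 1 : F) ≠ 0 := sub_ne_zero.2 fun h' => hc (Units.ext h')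
    have hdet : K.val 0 1 * K.val 1 0 ≠ 0 := by
      simpa [det_fin_two, (mul_eq_zero.1 h₀₀).resolve_right hc1] using K.det_ne_zero
    have hca : (c : F) = a :=
      sub_eq_zero.1 ((mul_eq_zero.1 h₀₁).resolve_left (left_ne_zero_of_mul hdet))
    have hac : (a * c : F) = 1 :=
      sub_eq_zero.1 ((mul_eq_zero.1 h₁₀).resolve_left (right_ne_zero_of_mul hdet))
    rw [hca, mul_self_eq_one_iff] at hac
    exact hac.elim (fun h' => ha (Units.ext h')) (fun h' => ha' (Units.ext h'))
  simp only [Units.val_one, mul_one] at h₀₁ h₁₀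
  exact ⟨(mul_eq_zero.1 h₀₁).resolve_right ha1,
    (mul_eq_zero.1 h₁₀).resolve_right (sub_ne_zero.2 (sub_ne_zero.1 ha1).symm)⟩

theorem range_mk_comp_diagHom {a : Fˣ} (ha : a ≠ 1) (ha' : a ≠ -1) :
    (ProjGenLinGroup.mk.comp (diagHom F)).range =
      Subgroup.centralizer {ProjGenLinGroup.mk (diagHom F a)} := by
  ext k
  rw [Subgroup.mem_centralizer_singleton_iff]
  constructor
  · rintro ⟨u, rfl⟩
    exact ((Commute.all u a).map (ProjGenLinGroup.mk.comp (diagHom F))).eq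
  · intro hk
    obtain ⟨K, rfl⟩ := ProjGenLinGroup.mk_surjective k
    rw [← map_mul, ← map_mul, ProjGenLinGroup.mk_eq_mk_iff] at hk
    obtain ⟨c, hc⟩ := hk
    obtain ⟨h₀₁, h₁₀⟩ := offDiag_eq_zero_of_mul_diagHom_eq ha ha' hc
    have hdet : K.val 0 0 * K.val 1 1 ≠ 0 := by
      simpa [det_fin_two, h₀₁] using K.det_ne_zero
    let p := Units.mk0 _ (left_ne_zero_of_mul hdet)
    let w := Units.mk0 _ (right_ne_zero_of_mul hdet)
    have hK : diagHom F (p * w⁻¹) * scalar (Fin 2) w = K := by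
      ext i j
      fin_cases i <;> fin_cases j <;> simp [-map_mul, p, w, h₀₁, h₁₀, right_ne_zero_of_mul hdet]
    exact ⟨p * w⁻¹, ProjGenLinGroup.mk_eq_mk_iff.2 ⟨w, hK⟩⟩

/-- The matrix with trace `b + 1`, determinant `b` and upper right entry `u` whose product with
`diag(a, 1)` has trace `2 s`; these conditions determine it when `a ≠ 1`. -/
def normalForm (a b : Fˣ) (s : F) (u : Fˣ) : GL (Fin 2) F :=
  letI x := (2 * s - b - 1) / (a - 1)
  mkOfDetNeZero !![x, u; (x * (b + 1 - x) - b) / u, b + 1 - x] (by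
    rw [det_fin_two_of, mul_div_cancel₀ _ u.ne_zero, sub_sub_cancel]
    exact b.ne_zero)

variable {a b : Fˣ} {s : F} {u : Fˣ}

theorem trace_normalForm : (normalForm a b s u).val.trace = b + 1 := by
  simp [normalForm, mkOfDetNeZero, trace_fin_two]

theorem det_normalForm : (normalForm a b s u).val.det = b := by
  simp [normalForm, mkOfDetNeZero, det_fin_two, mul_div_cancel₀]

theorem trace_diagHom_mul (a : Rˣ) (g : GL (Fin 2) R) :
    (diagHom R a * g).val.trace = a * g.val 0 0 + g.val 1 1 := by
  simp [trace_fin_two]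

theorem trace_diagHom_mul_normalForm (ha : a ≠ 1) :
    (diagHom F a * normalForm a b s u).val.trace = 2 * s := by
  have ha' : (a : F) - 1 ≠ 0 := sub_ne_zero.2 (by simpa using ha)
  rw [trace_diagHom_mul]
  change a * ((2 * s - b - 1) / (a - 1)) + (b + 1 - (2 * s - b - 1) / (a - 1)) = 2 * s
  field_simp
  ring

theorem eq_normalForm (ha : a ≠ 1) {g : GL (Fin 2) F} (hu : g.val 0 1 = u)
    (htr : g.val.trace = b + 1) (hdet : g.val.det = b)
    (hs : (diagHom F a * g).val.trace = 2 * s) : g = normalForm a b s u := by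
  have ha' : (a : F) - 1 ≠ 0 := sub_ne_zero.2 (by simpa using ha)
  have hu0 := u.ne_zero
  rw [trace_fin_two] at htr
  rw [det_fin_two, hu] at hdet
  rw [trace_diagHom_mul] at hs
  have h₀₀ : g.val 0 0 = (2 * s - b - 1) / (a - 1) := by
    rw [eq_div_iff ha']
    linear_combination hs - htr
  have h₁₁ : g.val 1 1 = b + 1 - (2 * s - b - 1) / (a - 1) := by
    rw [← h₀₀]
    linear_combination htr
  have h₁₀ : g.val 1 0 =
      ((2 * s - b - 1) / (a - 1) * (b + 1 - (2 * s - b - 1) / (a - 1)) - b) / u := by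
    rw [eq_div_iff hu0, ← h₁₁, ← h₀₀]
    linear_combination -hdet
  ext i j
  fin_cases i <;> fin_cases j <;> simp [normalForm, mkOfDetNeZero, h₀₀, hu, h₁₀, h₁₁]

theorem normalForm_notMem_center : normalForm a b s u ∉ Subgroup.center (GL (Fin 2) F) :=
  fun h => u.ne_zero (mem_center_iff_fin_two.1 h).1

theorem toConjAct_mk_diagHom_smul_mk_normalForm :
    ConjAct.toConjAct (ProjGenLinGroup.mk (diagHom F u)) •
      ProjGenLinGroup.mk (normalForm a b s 1) = ProjGenLinGroup.mk (normalForm a b s u) := by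
  rw [ConjAct.toConjAct_smul, mul_inv_eq_iff_eq_mul, ← map_mul, ← map_mul]
  congr 1
  ext i j
  fin_cases i <;> fin_cases j <;> simp [normalForm, mkOfDetNeZero, mul_comm, mul_div_cancel₀]

-- If `g` had a zero off the diagonal, its diagonal would be `(b, 1)` or `(1, b)`, so `2 s` would be
-- `a b + 1` or `a + b`; as `4 s ^ 2 = 4 a b`, then `(a b - 1) ^ 2` or `(a - b) ^ 2` would vanish.
theorem offDiag_mul_offDiag_ne_zero {g : GL (Fin 2) F} (hab : a ≠ b) (hab1 : a * b ≠ 1)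
    (hs : s ^ 2 = a * b)
    (htr : g.val.trace = b + 1) (hdet : g.val.det = b)
    (htr_mul : (diagHom F a * g).val.trace = 2 * s) : g.val 0 1 * g.val 1 0 ≠ 0 := by
  intro h
  rw [trace_fin_two] at htr
  rw [det_fin_two, h, sub_zero] at hdet
  rw [trace_diagHom_mul] at htr_mul
  have hroots : (g.val 0 0 - b) * (g.val 0 0 - 1) = 0 := by
    linear_combination g.val 0 0 * htr - hdet
  rcases mul_eq_zero.1 hroots with h₀₀ | h₀₀ <;> rw [sub_eq_zero] at h₀₀ <;> rw [h₀₀] at htr htr_mul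
  · have h_sq : (a * b - 1 : F) ^ 2 = 0 := by
      linear_combination (a * b + 1 + 2 * s : F) * (htr_mul - htr) + 4 * hs
    exact hab1 (Units.ext (by simpa using sub_eq_zero.1 (pow_eq_zero_iff two_ne_zero |>.1 h_sq)))
  · have h_sq : (a - b : F) ^ 2 = 0 := by
      linear_combination (a + b + 2 * s : F) * (htr_mul - htr) + 4 * hs
    exact hab (Units.ext (sub_eq_zero.1 (pow_eq_zero_iff two_ne_zero |>.1 h_sq)))

theorem diagHom_notMem_center {a : Rˣ} (ha : a ≠ 1) :
    diagHom R a ∉ Subgroup.center (GL (Fin 2) R) := by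
  rw [mem_center_iff_fin_two]
  simpa using ha

theorem isConj_mk_diagHom_iff (hb : b ≠ 1) {y : PGL(2, F)} :
    IsConj (ProjGenLinGroup.mk (diagHom F b)) y ↔
      ∃ g ∉ Subgroup.center (GL (Fin 2) F),
        g.val.trace = b + 1 ∧ g.val.det = b ∧ ProjGenLinGroup.mk g = y := by
  simpa using isConj_mk_iff_exists (diagHom_notMem_center hb) (y := y)

theorem mk_normalForm_mem_monodromyFibre (ha : a ≠ 1) (hb : b ≠ 1) (hs : s ^ 2 = a * b) :
    ProjGenLinGroup.mk (normalForm a b s u) ∈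
      monodromyFibre (ProjGenLinGroup.mk (diagHom F a)) (ProjGenLinGroup.mk (diagHom F b))
        (ProjGenLinGroup.mk (upperRightHom 1)) := by
  refine ⟨(isConj_mk_diagHom_iff hb).2
    ⟨_, normalForm_notMem_center, trace_normalForm, det_normalForm, rfl⟩, ?_⟩
  rw [← map_mul]
  refine isConj_mk_upperRightHom_inv_iff.2 ⟨fun h => ?_, s, ?_, trace_diagHom_mul_normalForm ha⟩
  · have h₀₁ := (mem_center_iff_fin_two.1 h).1
    simp [normalForm] at h₀₁
  · simp [hs, det_normalForm]

theorem mk_normalForm_inj (ha : a ≠ 1) (hb : b ≠ -1) {s' : F} {u' : Fˣ} (hs : s ^ 2 = s' ^ 2)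
    (h : ProjGenLinGroup.mk (normalForm a b s u) = ProjGenLinGroup.mk (normalForm a b s' u')) :
    s = s' ∧ u = u' := by
  obtain ⟨c, hc⟩ := ProjGenLinGroup.mk_eq_mk_iff.1 h
  have hb' : (b + 1 : F) ≠ 0 := fun h' => hb (Units.ext (eq_neg_of_add_eq_zero_left h'))
  obtain rfl : c = 1 := by
    have htr := trace_mul_scalar (normalForm a b s u) c
    rw [hc, trace_normalForm, trace_normalForm] at htr
    exact Units.ext (mul_right_cancel₀ hb' (by rw [← htr, Units.val_one, one_mul]))
  rw [map_one, mul_one] at hc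
  have h_two : 2 * s = 2 * s' := by
    rw [← trace_diagHom_mul_normalForm ha, hc, trace_diagHom_mul_normalForm ha]
  -- In characteristic two `h_two` is empty, but squaring is then injective.
  have h_sq : (s - s') ^ 2 = 0 := by
    linear_combination hs - s' * h_two
  exact ⟨sub_eq_zero.1 (pow_eq_zero_iff two_ne_zero |>.1 h_sq),
    Units.ext (congrArg (fun g => g.val 0 1) hc)⟩

theorem exists_mk_normalForm_eq (ha : a ≠ 1) (hb : b ≠ 1) (hab : a ≠ b) (hab1 : a * b ≠ 1)
    {y : PGL(2, F)}
    (hy : y ∈ monodromyFibre (ProjGenLinGroup.mk (diagHom F a)) (ProjGenLinGroup.mk (diagHom F b))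
        (ProjGenLinGroup.mk (upperRightHom 1))) :
    ∃ s u, s ^ 2 = (a * b : F) ∧ ProjGenLinGroup.mk (normalForm a b s u) = y := by
  obtain ⟨hby, hay⟩ := hy
  obtain ⟨g, -, htr, hdet, rfl⟩ := (isConj_mk_diagHom_iff hb).1 hby
  rw [← map_mul, isConj_mk_upperRightHom_inv_iff] at hay
  obtain ⟨-, s, hs, htr_mul⟩ := hay
  replace hs : s ^ 2 = a * b := by simpa [hdet] using hs
  have hu : g.val 0 1 ≠ 0 :=
    left_ne_zero_of_mul (offDiag_mul_offDiag_ne_zero hab hab1 hs htr hdet htr_mul)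
  exact ⟨s, Units.mk0 _ hu, hs,
    congrArg _ (eq_normalForm ha rfl htr hdet htr_mul).symm⟩

theorem bijOn_mk_normalForm (ha : a ≠ 1) (hb : b ≠ 1) (hb' : b ≠ -1) (hab : a ≠ b)
    (hab1 : a * b ≠ 1) :
    Set.BijOn
      (fun p : {s : F // s ^ 2 = a * b} × Fˣ => ProjGenLinGroup.mk (normalForm a b p.1 p.2))
      Set.univ
      (monodromyFibre (ProjGenLinGroup.mk (diagHom F a)) (ProjGenLinGroup.mk (diagHom F b))
        (ProjGenLinGroup.mk (upperRightHom 1))) := by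
  refine ⟨fun p _ => mk_normalForm_mem_monodromyFibre ha hb p.1.2, ?_, ?_⟩
  · rintro ⟨s, u⟩ - ⟨s', u'⟩ - h
    obtain ⟨hs, hu⟩ := mk_normalForm_inj ha hb' (s.2.trans s'.2.symm) h
    exact Prod.ext (Subtype.ext hs) hu
  · intro y hy
    obtain ⟨s, u, hs, rfl⟩ := exists_mk_normalForm_eq ha hb hab hab1 hy
    exact ⟨(⟨s, hs⟩, u), Set.mem_univ _, rfl⟩

end GL2

section Card

open Matrix Matrix.GeneralLinearGroup
open scoped MatrixGroups

variable {F : Type*} [Field F] [Fintype F]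

theorem natCard_center_GL {n : Type*} [Fintype n] [DecidableEq n] [Nonempty n] :
    Nat.card (Subgroup.center (GL n F)) = Fintype.card F - 1 := by
  have hinj : Function.Injective (scalar (R := F) n) := fun u v huv =>
    Units.ext (scalar_inj.1 (congrArg Units.val huv))
  rw [center_eq_range_scalar, ← Nat.card_congr (MonoidHom.ofInjective hinj).toEquiv,
    Nat.card_units, Nat.card_eq_fintype_card]

theorem natCard_PGL_mul {n : ℕ} [NeZero n] :
    Nat.card PGL(n, F) * (Fintype.card F - 1) =
      ∏ i : Fin n, (Fintype.card F ^ n - Fintype.card F ^ (i : ℕ)) := by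
  rw [← card_GL_field, ← natCard_center_GL (n := Fin n)]
  exact (Subgroup.card_eq_card_quotient_mul_card_subgroup _).symm

theorem natCard_PGL_two :
    (Nat.card PGL(2, F) : ℤ) = (Fintype.card F : ℤ) ^ 3 - Fintype.card F := by
  have hq : 1 < Fintype.card F := Fintype.one_lt_card
  have hq2 : Fintype.card F ≤ Fintype.card F ^ 2 := Nat.le_self_pow two_ne_zero _
  have h := congrArg (Nat.cast : ℕ → ℤ) (natCard_PGL_mul (F := F) (n := 2))
  rw [Fin.prod_univ_two, Fin.val_zero, Fin.val_one, pow_zero, pow_one] at h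
  push_cast [hq.le, hq2, hq.le.trans hq2] at h
  have hq0 : (Fintype.card F : ℤ) - 1 ≠ 0 := by
    have : (1 : ℤ) < Fintype.card F := mod_cast hq
    linarith
  exact mul_right_cancel₀ hq0 (by linear_combination h)

theorem natCard_sq_eq_sq {R : Type*} [CommRing R] [IsDomain R] (hR : ringChar R ≠ 2)
    {t : R} (ht : t ≠ 0) : Nat.card {s : R // s ^ 2 = t ^ 2} = 2 := by
  have ht' : t ≠ -t := fun h => ht ((Ring.eq_self_iff_eq_zero_of_char_ne_two hR).1 h.symm)
  have hset : {s : R | s ^ 2 = t ^ 2} = {t, -t} := by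
    ext s
    exact sq_eq_sq_iff_eq_or_eq_neg
  exact (congrArg Set.ncard hset).trans (Set.ncard_pair ht')

end Card

theorem PGL2_triple_count_generic_general {F : Type*} [Field F] {a b : F}
    (ha1 : a ≠ 1) (ha1' : a ≠ -1) (hb1 : b ≠ 1) (hb1' : b ≠ -1) (hab1 : a * b ≠ 1) (hab : a ≠ b)
    (D₁ D₂ J : Matrix.GeneralLinearGroup (Fin 2) F)
    (hD₁ : (D₁ : Matrix (Fin 2) (Fin 2) F) = Matrix.diagonal ![a, 1])
    (hD₂ : (D₂ : Matrix (Fin 2) (Fin 2) F) = Matrix.diagonal ![b, 1])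
    (hJ : (J : Matrix (Fin 2) (Fin 2) F) = !![1, 1; 0, 1]) :
    ∃ e : {s : F // s ^ 2 = a * b} × Matrix.ProjGenLinGroup (Fin 2) F ≃
        monodromyTriples (Matrix.ProjGenLinGroup.mk D₁) (Matrix.ProjGenLinGroup.mk D₂)
          (Matrix.ProjGenLinGroup.mk J),
      ∀ s g, (e (s, g)).val = ConjAct.toConjAct g • (e (s, 1)).val := by
  have ha : IsUnit a := by simpa [hD₁] using D₁.isUnit.map Matrix.detMonoidHom
  have hb : IsUnit b := by simpa [hD₂] using D₂.isUnit.map Matrix.detMonoidHom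
  lift a to Fˣ using ha
  lift b to Fˣ using hb
  replace ha1 : a ≠ 1 := ne_of_apply_ne Units.val ha1
  replace hb1 : b ≠ 1 := ne_of_apply_ne Units.val hb1
  obtain rfl : D₁ = diagHom F a := Units.ext hD₁
  obtain rfl : D₂ = diagHom F b := Units.ext hD₂
  obtain rfl : J = Matrix.GeneralLinearGroup.upperRightHom 1 := Units.ext hJ
  refine exists_equiv_monodromyTriples _
    (range_mk_comp_diagHom ha1 (ne_of_apply_ne Units.val ha1'))
    (fun s => Matrix.ProjGenLinGroup.mk (normalForm a b s 1)) ?_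
  simp only [MonoidHom.comp_apply, toConjAct_mk_diagHom_smul_mk_normalForm]
  exact bijOn_mk_normalForm ha1 hb1 (ne_of_apply_ne Units.val hb1') (ne_of_apply_ne Units.val hab)
    (ne_of_apply_ne Units.val hab1)

/-- Genus 0, three punctures, `PGL₂` (the quotient of `GL₂(F)` by the scalar matrices,
i.e. by its centre), generic case: with `C₁, C₂` the classes of the images of `diag(a,1)`,
`diag(b,1)` and `C₃` the class of the image of the regular unipotent `[[1,1],[0,1]]`,
the number of triples `(x₁,x₂,x₃) ∈ C₁ × C₂ × C₃` with `x₁x₂x₃ = 1` is `2(q³ - q)`. -/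
theorem PGL2_triple_count_generic
    {F : Type*} [Field F] [Fintype F] (hchar : ringChar F ≠ 2)
    (q : ℕ) (hq : q = Fintype.card F)
    (a b t : F) (ha0 : a ≠ 0) (hb0 : b ≠ 0) (ht0 : t ≠ 0)
    (ha1 : a ≠ 1) (ha1' : a ≠ -1) (hb1 : b ≠ 1) (hb1' : b ≠ -1)
    (habt : a * b = t ^ 2) (hab1 : a * b ≠ 1) (hab : a ≠ b)
    (D₁ D₂ J : (Matrix (Fin 2) (Fin 2) F)ˣ)
    (hD₁ : (D₁ : Matrix (Fin 2) (Fin 2) F) = Matrix.diagonal ![a, 1])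
    (hD₂ : (D₂ : Matrix (Fin 2) (Fin 2) F) = Matrix.diagonal ![b, 1])
    (hJ : (J : Matrix (Fin 2) (Fin 2) F) = !![1, 1; 0, 1]) :
    (Nat.card {x :
        ((Matrix (Fin 2) (Fin 2) F)ˣ ⧸ Subgroup.center (Matrix (Fin 2) (Fin 2) F)ˣ) ×
        ((Matrix (Fin 2) (Fin 2) F)ˣ ⧸ Subgroup.center (Matrix (Fin 2) (Fin 2) F)ˣ) ×
        ((Matrix (Fin 2) (Fin 2) F)ˣ ⧸ Subgroup.center (Matrix (Fin 2) (Fin 2) F)ˣ) //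
        IsConj ((D₁ : (Matrix (Fin 2) (Fin 2) F)ˣ ⧸
          Subgroup.center (Matrix (Fin 2) (Fin 2) F)ˣ)) x.1 ∧
        IsConj ((D₂ : (Matrix (Fin 2) (Fin 2) F)ˣ ⧸
          Subgroup.center (Matrix (Fin 2) (Fin 2) F)ˣ)) x.2.1 ∧
        IsConj ((J : (Matrix (Fin 2) (Fin 2) F)ˣ ⧸
          Subgroup.center (Matrix (Fin 2) (Fin 2) F)ˣ)) x.2.2 ∧
        x.1 * x.2.1 * x.2.2 = 1} : ℤ) = 2 * ((q : ℤ) ^ 3 - q) := by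
  obtain ⟨e, -⟩ := PGL2_triple_count_generic_general ha1 ha1' hb1 hb1' hab1 hab D₁ D₂ J hD₁ hD₂ hJ
  refine (congrArg Nat.cast (Nat.card_congr e.symm)).trans ?_
  rw [Nat.card_prod, habt, natCard_sq_eq_sq hchar ht0, Nat.cast_mul, natCard_PGL_two, hq,
    Nat.cast_ofNat]
end

section
/- Let k be a field of characteristic ≠ 2 and let a, b, t ∈ kˣ satisfy a ∉ {1, −1}, b ∉ {1, −1}, ab = t², ab ≠ 1, and a ≠ b. Define X₁ = [[at, 0], [(t−a)(t−1), t]], X₂ = [[−t, t], [(t−a)(t−1), −t²+t−a]], X₃ = [[1,1],[0,1]], and Y₁ = [[at, 0], [−(t+a)(t+1), t]], Y₂ = [[−t, t], [−(t+a)(t+1), t²+t+a]], Y₃ = [[1,1],[0,1]]. Then there is no one-dimensional subspace L of k² with X₁L ⊆ L, X₂L ⊆ L and X₃L ⊆ L, and likewise no one-dimensional subspace invariant under Y₁, Y₂ and Y₃; that is, both triples are irreducible. -/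
/-!
The nontrivial unipotent matrix `X₃ = Y₃` preserves only one line, the first coordinate axis, and a
matrix preserving that axis has vanishing lower-left entry. The lower-left entries of `X₁` and `Y₁`
are `(t - a) * (t - 1)` and the negative of its value at `-t`. Under `a * b = t ^ 2` they are
nonzero, because `t = ± a` would force `a = b` and `t = ± 1` would force `a * b = 1`. Over a domain,
submodules of rank one take the place of lines.
-/

section Domain

open Matrix Module

variable {R : Type*} [CommRing R] [IsDomain R]

theorem det_eq_zero_of_finrank_lt_card {n : Type*} [Fintype n] [DecidableEq n]
    {L : Submodule R (n → R)} (hL : finrank R L < Fintype.card n) {M : Matrix n n R}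
    (hM : ∀ i, M i ∈ L) : M.det = 0 := by
  refine M.det_eq_zero_of_not_linearIndependent_rows fun hM_indep ↦ hL.not_ge ?_
  have rows_indep : LinearIndependent R fun i ↦ (⟨M i, hM i⟩ : L) := .of_comp L.subtype hM_indep
  have rank_lt : Module.rank R L < Cardinal.aleph0 := L.rank_le.trans_lt (rank_lt_aleph0 R _)
  simpa [finrank] using Cardinal.toNat_le_toNat rows_indep.cardinal_lift_le_rank
    (by simpa using rank_lt)

theorem apply_one_eq_zero_of_jordanBlock_mulVec_mem {L : Submodule R (Fin 2 → R)}
    (hL : finrank R L ≤ 1) {x y : R} (hy : y ≠ 0) (hinv : ∀ v ∈ L, !![x, y; 0, x] *ᵥ v ∈ L)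
    {v : Fin 2 → R} (hv : v ∈ L) : v 1 = 0 := by
  have det_eq_zero : (of ![!![x, y; 0, x] *ᵥ v, v]).det = 0 := by
    refine det_eq_zero_of_finrank_lt_card (L := L) (by simpa using Nat.lt_succ_of_le hL) ?_
    exact Fin.forall_fin_two.mpr ⟨hinv v hv, hv⟩
  have det_eq : (of ![!![x, y; 0, x] *ᵥ v, v]).det = y * v 1 ^ 2 := by
    simp only [det_fin_two, of_apply, mulVec, dotProduct, Fin.sum_univ_two, cons_val_zero,
      cons_val_one]
    ring
  simpa [hy] using det_eq.symm.trans det_eq_zero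

theorem apply_one_zero_eq_zero_of_jordanBlock_mulVec_mem {L : Submodule R (Fin 2 → R)}
    (hL : finrank R L = 1) {x y : R} (hy : y ≠ 0) {A : Matrix (Fin 2) (Fin 2) R}
    (hA : ∀ v ∈ L, A *ᵥ v ∈ L) (hinv : ∀ v ∈ L, !![x, y; 0, x] *ᵥ v ∈ L) : A 1 0 = 0 := by
  have apply_one_eq_zero {v : Fin 2 → R} (hv : v ∈ L) : v 1 = 0 :=
    apply_one_eq_zero_of_jordanBlock_mulVec_mem hL.le hy hinv hv
  have hL_ne_bot : L ≠ ⊥ := by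
    rintro rfl
    simp at hL
  obtain ⟨v, hv, hv_ne_zero⟩ := L.exists_mem_ne_zero_of_ne_bot hL_ne_bot
  have hv0 : v 0 ≠ 0 := fun h ↦
    hv_ne_zero (funext (Fin.forall_fin_two.mpr ⟨h, apply_one_eq_zero hv⟩))
  have entry_mul_eq_zero : A 1 0 * v 0 = 0 := by
    simpa [mulVec, dotProduct, apply_one_eq_zero hv] using apply_one_eq_zero (hA v hv)
  exact (mul_eq_zero.mp entry_mul_eq_zero).resolve_right hv0

theorem sub_mul_sub_one_ne_zero {a b t : R} (ha0 : a ≠ 0) (habt : a * b = t ^ 2)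
    (hab1 : a * b ≠ 1) (hab : a ≠ b) : (t - a) * (t - 1) ≠ 0 := by
  refine mul_ne_zero (sub_ne_zero.mpr ?_) (sub_ne_zero.mpr ?_)
  · rintro rfl
    exact hab (mul_left_cancel₀ ha0 (by rw [habt, sq]))
  · rintro rfl
    exact hab1 (by rw [habt, one_pow])

theorem rigid_triples_irreducible_general {a b t : R} (ha0 : a ≠ 0) (habt : a * b = t ^ 2)
    (hab1 : a * b ≠ 1) (hab : a ≠ b) :
    (¬ ∃ L : Submodule R (Fin 2 → R), finrank R L = 1 ∧
        (∀ v ∈ L, !![a * t, 0; (t - a) * (t - 1), t] *ᵥ v ∈ L) ∧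
        (∀ v ∈ L, !![1, 1; 0, 1] *ᵥ v ∈ L)) ∧
    (¬ ∃ L : Submodule R (Fin 2 → R), finrank R L = 1 ∧
        (∀ v ∈ L, !![a * t, 0; -((t + a) * (t + 1)), t] *ᵥ v ∈ L) ∧
        (∀ v ∈ L, !![1, 1; 0, 1] *ᵥ v ∈ L)) := by
  have hX : (t - a) * (t - 1) ≠ 0 := sub_mul_sub_one_ne_zero ha0 habt hab1 hab
  have hY : -((t + a) * (t + 1)) ≠ 0 := by
    have : (-t - a) * (-t - 1) ≠ 0 :=
      sub_mul_sub_one_ne_zero ha0 (habt.trans (neg_sq t).symm) hab1 hab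
    rw [neg_ne_zero]
    convert this using 1
    ring
  constructor
  · rintro ⟨L, hL, h₁, h₃⟩
    exact hX (apply_one_zero_eq_zero_of_jordanBlock_mulVec_mem hL one_ne_zero h₁ h₃)
  · rintro ⟨L, hL, h₁, h₃⟩
    exact hY (apply_one_zero_eq_zero_of_jordanBlock_mulVec_mem hL one_ne_zero h₁ h₃)

end Domain

/-- The explicit triples `(X₁,X₂,X₃)` and `(Y₁,Y₂,Y₃)` are irreducible: neither triple
admits a common invariant one-dimensional subspace of `k²`. -/
theorem rigid_triples_irreducible
    {k : Type*} [Field k] (hchar : ringChar k ≠ 2)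
    (a b t : k) (ha0 : a ≠ 0) (hb0 : b ≠ 0) (ht0 : t ≠ 0)
    (ha1 : a ≠ 1) (ha1' : a ≠ -1) (hb1 : b ≠ 1) (hb1' : b ≠ -1)
    (habt : a * b = t ^ 2) (hab1 : a * b ≠ 1) (hab : a ≠ b)
    (X₁ X₂ X₃ Y₁ Y₂ Y₃ : Matrix (Fin 2) (Fin 2) k)
    (hX₁ : X₁ = !![a * t, 0; (t - a) * (t - 1), t])
    (hX₂ : X₂ = !![-t, t; (t - a) * (t - 1), -t ^ 2 + t - a])
    (hX₃ : X₃ = !![1, 1; 0, 1])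
    (hY₁ : Y₁ = !![a * t, 0; -((t + a) * (t + 1)), t])
    (hY₂ : Y₂ = !![-t, t; -((t + a) * (t + 1)), t ^ 2 + t + a])
    (hY₃ : Y₃ = !![1, 1; 0, 1]) :
    (¬ ∃ L : Submodule k (Fin 2 → k), Module.finrank k L = 1 ∧
        (∀ v ∈ L, X₁.mulVec v ∈ L) ∧ (∀ v ∈ L, X₂.mulVec v ∈ L) ∧
        (∀ v ∈ L, X₃.mulVec v ∈ L)) ∧
    (¬ ∃ L : Submodule k (Fin 2 → k), Module.finrank k L = 1 ∧
        (∀ v ∈ L, Y₁.mulVec v ∈ L) ∧ (∀ v ∈ L, Y₂.mulVec v ∈ L) ∧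
        (∀ v ∈ L, Y₃.mulVec v ∈ L)) := by
  subst hX₁ hX₃ hY₁ hY₃
  exact (rigid_triples_irreducible_general ha0 habt hab1 hab).imp
    (mt fun ⟨L, hL, h₁, _, h₃⟩ ↦ ⟨L, hL, h₁, h₃⟩) (mt fun ⟨L, hL, h₁, _, h₃⟩ ↦ ⟨L, hL, h₁, h₃⟩)
end

section
/- Let F be a finite field with q elements of odd characteristic and let a₁, a₂, b₁, b₂, c₁, c₂ ∈ Fˣ satisfy a₁ ≠ a₂, b₁ ≠ b₂, c₁ ≠ c₂, a₁a₂b₁b₂c₁c₂ = 1, and a_i b_j c_k ≠ 1 for all i, j, k ∈ {1,2}. Let C₁, C₂, C₃ be the conjugacy classes of diag(a₁,a₂), diag(b₁,b₂), diag(c₁,c₂) in GL₂(F) and C₄ the regular unipotent conjugacy class. Then the number of quadruples (S₁, S₂, S₃, S₄) ∈ C₁ × C₂ × C₃ × C₄ with S₁S₂S₃S₄ = 1 equals (q³ − q) · q(q+3). -/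
/-!
Let `A`, `B`, `C` be the three diagonal matrices. Solving for `S₁` turns the quadruples into triples
`(S₂, S₃, S₄)` with `S₂S₃S₄` conjugate to `A⁻¹`, and conjugation invariance lets us fix `S₃ = C`.
For given `S₄` the number of admissible `S₂` depends only on the class of the nonscalar matrix
`CS₄`; as `det (CS₄) = c₁c₂` is fixed, this is a function `f τ` of `τ = tr (CS₄)`. Every `τ` comes
from `q - 1` matrices `S₄`, except that `τ = c₁ + c₂` comes from `2(q - 1)`, so the sum over `S₄` is
`(q - 1)(∑ τ, f τ + f (c₁ + c₂))`.

To sum `f`, replace `CS₄` by the companion matrix `K` with trace `τ` and determinant `c₁c₂`. As `τ`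
varies, `XK` runs over all matrices of determinant `c₁c₂ det X` whose first column is the second
column of `X`. So `∑ τ, f τ` counts the pairs of a conjugate of `B` and a conjugate of `A⁻¹` that
share a column in this way, of which there are `(q + 1)²`. The additional term `f (c₁ + c₂)` is
evaluated at `C` itself: `tr X` and `tr (XC)` determine the diagonal of a conjugate `X` of `B`, and
`det X` then the product of its off-diagonal entries, which is nonzero by genericity; this leaves
`q - 1` choices. Altogether the count is `(q² + q)(q - 1)((q + 1)² + (q - 1))`.
-/

open Finset Matrix

section Monoid

variable {G : Type*} [Monoid G]

lemma exists_mulEquiv_of_isConj {P Q : G} (h : IsConj P Q) :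
    ∃ e : G ≃* G, e P = Q ∧ ∀ X, IsConj X (e X) := by
  obtain ⟨u, hu⟩ := h
  refine ⟨MulDistribMulAction.toMulEquiv G (ConjAct.toConjAct u), ?_, fun X ↦ ⟨u, ?_⟩⟩
  · exact (Units.mul_inv_eq_iff_eq_mul u).2 hu
  · simp [SemiconjBy, ConjAct.units_smul_def, mul_assoc]

lemma isConj_units_inv_and_mul_eq_one {A : Gˣ} {x y : G} (hx : IsConj ↑A x) (hxy : x * y = 1) :
    IsConj (↑A⁻¹ : G) y ∧ y * x = 1 := by
  obtain ⟨e, rfl, he⟩ := exists_mulEquiv_of_isConj hx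
  have hinv : e ↑A⁻¹ * e A = 1 := by rw [← map_mul, A.inv_mul, map_one]
  obtain rfl : e ↑A⁻¹ = y := left_inv_eq_right_inv hinv hxy
  exact ⟨he _, hinv⟩

lemma exists_isConj_mul_eq_one {A : Gˣ} {y : G} (hy : IsConj (↑A⁻¹ : G) y) :
    ∃ x, IsConj ↑A x ∧ x * y = 1 := by
  obtain ⟨e, rfl, he⟩ := exists_mulEquiv_of_isConj hy
  exact ⟨e A, he _, by rw [← map_mul, A.mul_inv, map_one]⟩

variable [Fintype G] [DecidableEq G]

/-- The number of elements of the conjugacy class of `B` which right multiplication by `P` carries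
into the conjugacy class of `A`. -/
def transportCount (A B P : G) : ℕ :=
  #{X | IsConj B X ∧ IsConj A (X * P)}

lemma transportCount_congr (A B : G) {P Q : G} (h : IsConj P Q) :
    transportCount A B P = transportCount A B Q := by
  obtain ⟨e, rfl, he⟩ := exists_mulEquiv_of_isConj h
  refine card_equiv e.toEquiv fun X ↦ ?_
  have hconj {A Y : G} : IsConj A Y ↔ IsConj A (e Y) :=
    ⟨fun h ↦ h.trans (he Y), fun h ↦ h.trans (he Y).symm⟩
  simp [← map_mul, ← hconj]

lemma sum_transportCount_mul_congr (A B U : G) {P Q : G} (h : IsConj P Q) :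
    ∑ S with IsConj U S, transportCount A B (P * S) =
      ∑ S with IsConj U S, transportCount A B (Q * S) := by
  obtain ⟨e, rfl, he⟩ := exists_mulEquiv_of_isConj h
  refine sum_equiv e.toEquiv (fun S ↦ ?_) fun S _ ↦ ?_
  · simpa using ⟨fun h ↦ h.trans (he S), fun h ↦ h.trans (he S).symm⟩
  · exact transportCount_congr A B (by simpa using he (P * S))

lemma card_triples_isConj_mul (A B C U : G) :
    #{y : G × G × G | IsConj B y.1 ∧ IsConj C y.2.1 ∧ IsConj U y.2.2 ∧
        IsConj A (y.1 * (y.2.1 * y.2.2))} =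
      #{Z | IsConj C Z} * ∑ S with IsConj U S, transportCount A B (C * S) := by
  calc
    _ = ∑ Z with IsConj C Z, ∑ S with IsConj U S, transportCount A B (Z * S) := by
      rw [card_filter, Fintype.sum_prod_type_right, Fintype.sum_prod_type, sum_filter]
      simp only [transportCount, card_filter, sum_filter]
      refine sum_congr rfl fun Z _ ↦ ?_
      split_ifs with hZ
      · refine sum_congr rfl fun S _ ↦ ?_
        split_ifs with hS <;> simp [hZ, hS]
      · simp [hZ]
    _ = _ := by
      rw [← smul_eq_mul, ← sum_const]
      exact sum_congr rfl fun Z hZ ↦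
        (sum_transportCount_mul_congr A B U (mem_filter.1 hZ).2).symm

theorem card_quadruples_mul_eq_one (A : Gˣ) (B C U : G) :
    Nat.card {x : G × G × G × G // IsConj ↑A x.1 ∧ IsConj B x.2.1 ∧ IsConj C x.2.2.1 ∧
        IsConj U x.2.2.2 ∧ x.1 * x.2.1 * x.2.2.1 * x.2.2.2 = 1} =
      #{Z | IsConj C Z} * ∑ S with IsConj U S, transportCount (↑A⁻¹) B (C * S) := by
  rw [← card_triples_isConj_mul, Nat.card_eq_fintype_card, Fintype.card_subtype]
  simp only [mul_assoc]
  refine card_nbij Prod.snd ?_ ?_ ?_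
  · rintro ⟨x, y⟩ hx
    obtain ⟨hA, hB, hC, hU, hxy⟩ := (mem_filter.1 hx).2
    simpa using ⟨hB, hC, hU, (isConj_units_inv_and_mul_eq_one hA hxy).1⟩
  · rintro ⟨x, y⟩ hx ⟨x', y'⟩ hx' (rfl : y = y')
    obtain ⟨hA, -, -, -, hxy⟩ := (mem_filter.1 hx).2
    obtain ⟨-, -, -, -, hxy'⟩ := (mem_filter.1 hx').2
    have hyx := (isConj_units_inv_and_mul_eq_one hA hxy).2
    exact Prod.ext (left_inv_eq_right_inv hxy' hyx).symm rfl
  · rintro y hy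
    obtain ⟨hB, hC, hU, hA⟩ := (mem_filter.1 hy).2
    obtain ⟨x, hx, hxy⟩ := exists_isConj_mul_eq_one hA
    exact ⟨(x, y), by simpa using ⟨hx, hB, hC, hU, hxy⟩, rfl⟩

end Monoid

lemma sum_ite_eq_or_eq {α R : Type*} [Fintype α] [DecidableEq α] [NonAssocSemiring R] {r s : α}
    (hrs : r ≠ s) (c : R) :
    ∑ x, (if x = r ∨ x = s then c else 0) = 2 * c := by
  rw [← sum_filter, filter_or, filter_eq', filter_eq']
  simp [card_pair hrs]

lemma sum_sum_ite_mul_ite {α R : Type*} [Fintype α] [DecidableEq α] [Zero α] [CommRing R]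
    {a b : Fin 2 → α} (ha : a 0 ≠ a 1) (hb : b 0 ≠ b 1) (ha0 : ∀ i, a i ≠ 0) (hb0 : ∀ i, b i ≠ 0)
    (c : R) :
    ∑ y, ∑ w, (if y = 0 then if w = b 0 ∨ w = b 1 then c else 0 else 1) *
        (if w = 0 then if y = a 0 ∨ y = a 1 then c else 0 else 1) =
      (Fintype.card α - 1) ^ 2 + 4 * c := by
  have hsplit (y w : α) :
      ((if y = 0 then if w = b 0 ∨ w = b 1 then c else 0 else 1) *
        (if w = 0 then if y = a 0 ∨ y = a 1 then c else 0 else 1) : R) =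
      (if y = 0 then 0 else 1) * (if w = 0 then 0 else 1) +
        (if y = 0 then 1 else 0) * (if w = b 0 ∨ w = b 1 then c else 0) +
        (if y = a 0 ∨ y = a 1 then c else 0) * (if w = 0 then 1 else 0) := by
    by_cases hy : y = 0 <;> by_cases hw : w = 0 <;>
      simp [hy, hw, (ha0 _).symm, (hb0 _).symm]
  have hne : ∑ x : α, (if x = 0 then 0 else 1 : R) = Fintype.card α - 1 := by
    simp [sum_ite, filter_ne', card_erase_of_mem, Nat.cast_pred Fintype.card_pos]
  simp only [hsplit, sum_add_distrib, ← mul_sum, ← sum_mul, hne,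
    sum_ite_eq_or_eq ha, sum_ite_eq_or_eq hb, sum_ite_eq', mem_univ, if_true]
  ring

lemma card_mul_left_eq {M₀ : Type*} [GroupWithZero M₀] [Fintype M₀] [DecidableEq M₀] (a b : M₀) :
    #{x | a * x = b} = if a = 0 then if b = 0 then Fintype.card M₀ else 0 else 1 := by
  split_ifs with ha hb
  · simp [ha, hb]
  · simp [ha, Ne.symm hb]
  · rw [card_eq_one]
    refine ⟨a⁻¹ * b, ?_⟩
    ext x
    simp [eq_inv_mul_iff_mul_eq₀ ha]

section CommRing

variable {R : Type*} [CommRing R]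

lemma trace_eq_of_isConj_s15 {n : Type*} [Fintype n] [DecidableEq n] {X Y : Matrix n n R}
    (h : IsConj X Y) : X.trace = Y.trace := by
  obtain ⟨u, hu⟩ := h
  rw [← (Units.mul_inv_eq_iff_eq_mul u).2 hu, trace_units_conj]

lemma det_eq_of_isConj_s15 {n : Type*} [Fintype n] [DecidableEq n] {X Y : Matrix n n R}
    (h : IsConj X Y) : X.det = Y.det := by
  obtain ⟨u, hu⟩ := h
  rw [← (Units.mul_inv_eq_iff_eq_mul u).2 hu, det_units_conj]

lemma mul_sub_eq_mul_iff [NoZeroDivisors R] {r s x : R} :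
    x * (r + s - x) = r * s ↔ x = r ∨ x = s := by
  rw [← sub_eq_zero, ← sub_eq_zero (a := x), ← sub_eq_zero (a := x), ← mul_eq_zero]
  constructor <;> intro h <;> linear_combination -h

variable {X : Matrix (Fin 2) (Fin 2) R}

lemma mem_range_scalar_fin_two_iff :
    X ∈ Set.range (scalar (Fin 2)) ↔ X 0 1 = 0 ∧ X 1 0 = 0 ∧ X 0 0 = X 1 1 := by
  constructor
  · rintro ⟨k, rfl⟩
    simp
  · rintro ⟨h01, h10, hdiag⟩
    refine ⟨X 0 0, ?_⟩
    ext i j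
    fin_cases i <;> fin_cases j <;> simp [h01, h10, hdiag]

lemma eq_one_of_mem_range_scalar [IsReduced R] (hX : X ∈ Set.range (scalar (Fin 2)))
    (htr : X.trace = 2) (hdet : X.det = 1) : X = 1 := by
  obtain ⟨k, rfl⟩ := hX
  have hk : (k - 1) ^ 2 = 0 := by
    simp only [scalar_apply, trace_diagonal, det_diagonal, Fin.sum_univ_two, Fin.prod_univ_two]
      at htr hdet
    linear_combination hdet - htr
  rw [sub_eq_zero.1 (pow_eq_zero_iff two_ne_zero |>.1 hk), map_one]

/-- The companion matrix of `T² - t T + d`. -/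
def companionTwo (t d : R) : Matrix (Fin 2) (Fin 2) R :=
  !![0, -d; 1, t]

lemma isConj_companionTwo_of_isUnit_det (v : Fin 2 → R) (hv : IsUnit (of ![v, X *ᵥ v]).det) :
    IsConj (companionTwo X.trace X.det) X := by
  have hu : IsUnit (of ![v, X *ᵥ v])ᵀ := by
    rwa [isUnit_iff_isUnit_det, det_transpose]
  refine ⟨hu.unit, ?_⟩
  change (of ![v, X *ᵥ v])ᵀ * companionTwo X.trace X.det = X * (of ![v, X *ᵥ v])ᵀ
  ext i j
  fin_cases i <;> fin_cases j <;>
    simp [companionTwo, mul_apply, det_fin_two, trace_fin_two] <;> ring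

lemma eq_companionTwo (h00 : X 0 0 = 0) (h10 : X 1 0 = 1) :
    X = companionTwo X.trace X.det := by
  ext i j
  fin_cases i <;> fin_cases j <;> simp [companionTwo, h00, h10, trace_fin_two, det_fin_two]

end CommRing

section Field

variable {F : Type*} [Field F] {X Y : Matrix (Fin 2) (Fin 2) F}

lemma isConj_companionTwo (hX : X ∉ Set.range (scalar (Fin 2))) :
    IsConj (companionTwo X.trace X.det) X := by
  suffices ∃ v, (of ![v, X *ᵥ v]).det ≠ 0 from
    this.elim fun v hv ↦ isConj_companionTwo_of_isUnit_det v (isUnit_iff_ne_zero.2 hv)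
  by_contra! hv
  have h10 : X 1 0 = 0 := by simpa [det_fin_two, vec2_dotProduct, mulVec] using hv ![1, 0]
  have h01 : X 0 1 = 0 := by simpa [det_fin_two, vec2_dotProduct, mulVec] using hv ![0, 1]
  have h11 : X 1 1 - X 0 0 = 0 := by
    simpa [det_fin_two, vec2_dotProduct, mulVec, h10, h01] using hv ![1, 1]
  exact hX (mem_range_scalar_fin_two_iff.2 ⟨h01, h10, (sub_eq_zero.1 h11).symm⟩)

lemma isConj_iff_trace_eq_det_eq (hX : X ∉ Set.range (scalar (Fin 2)))
    (hY : Y ∉ Set.range (scalar (Fin 2))) :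
    IsConj X Y ↔ Y.trace = X.trace ∧ Y.det = X.det := by
  refine ⟨fun h ↦ ⟨(trace_eq_of_isConj_s15 h).symm, (det_eq_of_isConj_s15 h).symm⟩, fun ⟨htr, hdet⟩ ↦ ?_⟩
  have hY' := isConj_companionTwo hY
  rw [htr, hdet] at hY'
  exact (isConj_companionTwo hX).symm.trans hY'

lemma diagonal_notMem_range_scalar {a : Fin 2 → F} (ha : a 0 ≠ a 1) :
    diagonal a ∉ Set.range (scalar (Fin 2)) :=
  fun h ↦ ha (by simpa using (mem_range_scalar_fin_two_iff.1 h).2.2)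

lemma isConj_diagonal_iff {a : Fin 2 → F} (ha : a 0 ≠ a 1) :
    IsConj (diagonal a) X ↔ X.trace = a 0 + a 1 ∧ X.det = a 0 * a 1 := by
  have htr : (diagonal a).trace = a 0 + a 1 := by simp
  have hdet : (diagonal a).det = a 0 * a 1 := by simp
  constructor
  · intro h
    rw [← trace_eq_of_isConj_s15 h, ← det_eq_of_isConj_s15 h]
    exact ⟨htr, hdet⟩
  · intro h
    refine (isConj_iff_trace_eq_det_eq (diagonal_notMem_range_scalar ha) ?_).2 (by rwa [htr, hdet])
    rintro ⟨k, rfl⟩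
    simp only [scalar_apply, trace_diagonal, det_diagonal, Fin.sum_univ_two, Fin.prod_univ_two] at h
    exact ha (sub_eq_zero.1 (pow_eq_zero_iff two_ne_zero |>.1
      (by linear_combination 4 * h.2 - (k + k + a 0 + a 1) * h.1)))

lemma isConj_unipotent_iff :
    IsConj !![1, 1; 0, 1] X ↔ X.trace = 2 ∧ X.det = 1 ∧ X ≠ 1 := by
  have htr : (!![1, 1; 0, 1] : Matrix (Fin 2) (Fin 2) F).trace = 2 := by
    rw [trace_fin_two_of, one_add_one_eq_two]
  have hdet : (!![1, 1; 0, 1] : Matrix (Fin 2) (Fin 2) F).det = 1 := by simp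
  have hU : !![1, 1; 0, 1] ∉ Set.range (scalar (Fin 2) : F → _) :=
    fun h ↦ one_ne_zero (mem_range_scalar_fin_two_iff.1 h).1
  constructor
  · intro h
    refine ⟨htr ▸ (trace_eq_of_isConj_s15 h).symm, hdet ▸ (det_eq_of_isConj_s15 h).symm, ?_⟩
    rintro rfl
    exact hU ⟨1, by rw [map_one, isConj_one_left.1 h]⟩
  · rintro ⟨hXtr, hXdet, hX⟩
    exact (isConj_iff_trace_eq_det_eq hU fun h ↦ hX (eq_one_of_mem_range_scalar h hXtr hXdet)).2
      ⟨hXtr.trans htr.symm, hXdet.trans hdet.symm⟩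

lemma diagonal_mul_notMem_range_scalar {c : Fin 2 → F} (hc0 : ∀ i, c i ≠ 0)
    (hX : IsConj !![1, 1; 0, 1] X) : diagonal c * X ∉ Set.range (scalar (Fin 2)) := by
  obtain ⟨htr, hdet, hX1⟩ := isConj_unipotent_iff.1 hX
  rw [mem_range_scalar_fin_two_iff]
  rintro ⟨h01, h10, -⟩
  simp only [diagonal_mul, mul_eq_zero, hc0, false_or] at h01 h10
  rw [trace_fin_two] at htr
  rw [det_fin_two, h01, zero_mul, sub_zero] at hdet
  have h00 : X 0 0 = 1 := (mul_sub_eq_mul_iff (r := (1 : F)) (s := 1)).1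
    (by linear_combination hdet - X 0 0 * htr) |>.elim id id
  have h11 : X 1 1 = 1 := by rwa [h00, one_mul] at hdet
  exact hX1 (eq_one_of_mem_range_scalar
    (mem_range_scalar_fin_two_iff.2 ⟨h01, h10, h00.trans h11.symm⟩)
    (by rw [trace_fin_two, htr]) (by rw [det_fin_two, h01, zero_mul, sub_zero, hdet]))

lemma trace_mul_diagonal_eq_iff {c : Fin 2 → F} (hc : c 0 ≠ c 1) (γ : F) :
    (X * diagonal c).trace = γ ↔ X 0 0 = (γ - c 1 * X.trace) / (c 0 - c 1) := by
  rw [eq_div_iff (sub_ne_zero.2 hc), trace_fin_two, trace_fin_two, mul_diagonal, mul_diagonal]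
  constructor <;> intro h <;> linear_combination h

lemma exists_units_eq_diagonal {n : Type*} [Fintype n] [DecidableEq n] {a : n → F}
    (ha : ∀ i, a i ≠ 0) :
    ∃ A : (Matrix n n F)ˣ, (A : Matrix n n F) = diagonal a ∧ (↑A⁻¹ : Matrix n n F) = diagonal a⁻¹ :=
  ⟨⟨diagonal a, diagonal a⁻¹, by simp [ha], by simp [ha]⟩, rfl, rfl⟩

section Count

variable [Fintype F] [DecidableEq F]

lemma card_trace_det_col_zero (t d x z : F) :
    #{X : Matrix (Fin 2) (Fin 2) F | X.trace = t ∧ X.det = d ∧ X 0 0 = x ∧ X 1 0 = z} =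
      if z = 0 then if x * (t - x) = d then Fintype.card F else 0 else 1 := by
  simp_rw [← sub_eq_zero (a := x * (t - x)), ← card_mul_left_eq]
  refine card_nbij' (fun X ↦ X 0 1) (fun y ↦ !![x, y; z, t - x]) ?_ ?_ ?_ ?_
  · intro X hX
    obtain ⟨htr, hdet, hx, hz⟩ := (mem_filter.1 hX).2
    rw [trace_fin_two] at htr
    rw [det_fin_two] at hdet
    simp only [coe_filter, mem_univ, true_and, Set.mem_ofPred_eq]
    linear_combination X 0 0 * htr - hdet + (t - X 0 0 - x) * hx - X 0 1 * hz
  · intro y hy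
    simp only [coe_filter, mem_univ, true_and, Set.mem_ofPred_eq] at hy ⊢
    simp only [trace_fin_two, of_apply, cons_val', cons_val_zero, cons_val_fin_one, cons_val_one,
      add_sub_cancel, det_fin_two_of, and_self, and_true, true_and]
    linear_combination -hy
  · intro X hX
    obtain ⟨htr, -, hx, hz⟩ := (mem_filter.1 hX).2
    rw [trace_fin_two] at htr
    ext i j
    fin_cases i <;> fin_cases j <;> simp [← hx, ← hz, ← htr]
  · intro y _
    rfl

lemma card_trace_det_col_one (t d y w : F) :
    #{X : Matrix (Fin 2) (Fin 2) F | X.trace = t ∧ X.det = d ∧ X 0 1 = y ∧ X 1 1 = w} =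
      if y = 0 then if w * (t - w) = d then Fintype.card F else 0 else 1 := by
  rw [← card_trace_det_col_zero]
  refine card_equiv (reindex (Equiv.swap 0 1) (Equiv.swap 0 1)) fun X ↦ ?_
  simp [trace_fin_two, det_submatrix_equiv_self, add_comm, and_comm]

lemma card_trace_det_apply_zero_zero (t d x : F) :
    (#{X : Matrix (Fin 2) (Fin 2) F | X.trace = t ∧ X.det = d ∧ X 0 0 = x} : ℤ) =
      Fintype.card F - 1 + if x * (t - x) = d then (Fintype.card F : ℤ) else 0 := by
  rw [card_eq_sum_card_fiberwise (f := fun X ↦ X 1 0) (t := univ) fun _ _ ↦ mem_univ _]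
  simp only [filter_filter, and_assoc, card_trace_det_col_zero]
  rw [← add_sum_erase univ _ (mem_univ 0), if_pos rfl,
    sum_congr rfl fun z hz ↦ if_neg (ne_of_mem_erase hz), sum_const,
    card_erase_of_mem (mem_univ 0), card_univ, smul_eq_mul, mul_one]
  push_cast [Nat.cast_pred Fintype.card_pos]
  ring

lemma card_isConj_diagonal {c : Fin 2 → F} (hc : c 0 ≠ c 1) :
    (#{X | IsConj (diagonal c) X} : ℤ) = Fintype.card F ^ 2 + Fintype.card F := by
  simp_rw [isConj_diagonal_iff hc]
  rw [card_eq_sum_card_fiberwise (f := fun X ↦ X 0 0) (t := univ) fun _ _ ↦ mem_univ _]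
  push_cast
  simp only [filter_filter, and_assoc, card_trace_det_apply_zero_zero, mul_sub_eq_mul_iff]
  rw [sum_add_distrib, sum_ite_eq_or_eq hc, sum_const, card_univ, nsmul_eq_mul]
  ring

lemma transportCount_diagonal {a b c : Fin 2 → F} (ha : a 0 ≠ a 1) (hb : b 0 ≠ b 1)
    (hc : c 0 ≠ c 1) (hdet : b 0 * b 1 * (c 0 * c 1) = a 0 * a 1)
    (hgen : ∀ i j, b j * c 0 ≠ a i) :
    (transportCount (diagonal a) (diagonal b) (diagonal c) : ℤ) = Fintype.card F - 1 := by
  have hset (X : Matrix (Fin 2) (Fin 2) F) :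
      IsConj (diagonal b) X ∧ IsConj (diagonal a) (X * diagonal c) ↔
        X.trace = b 0 + b 1 ∧ X.det = b 0 * b 1 ∧
          X 0 0 = (a 0 + a 1 - c 1 * (b 0 + b 1)) / (c 0 - c 1) := by
    rw [isConj_diagonal_iff hb, isConj_diagonal_iff ha, trace_mul_diagonal_eq_iff hc, det_mul,
      det_diagonal, Fin.prod_univ_two]
    constructor
    · rintro ⟨⟨htr, hd⟩, hx, -⟩
      exact ⟨htr, hd, htr ▸ hx⟩
    · rintro ⟨htr, hd, hx⟩
      exact ⟨⟨htr, hd⟩, by rwa [htr], by rw [hd, hdet]⟩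
  simp_rw [transportCount, hset]
  rw [card_trace_det_apply_zero_zero, if_neg, add_zero]
  rw [mul_sub_eq_mul_iff, div_eq_iff (sub_ne_zero.2 hc), div_eq_iff (sub_ne_zero.2 hc)]
  have hne (j : Fin 2) : b j * c 0 * (a 0 + a 1 - b j * c 0) ≠ a 0 * a 1 := fun h ↦
    (mul_sub_eq_mul_iff.1 h).elim (hgen 0 j) (hgen 1 j)
  rintro (h | h)
  · exact hne 0 (by linear_combination b 0 * c 0 * h + hdet)
  · exact hne 1 (by linear_combination b 1 * c 0 * h + hdet)

lemma card_isConj_unipotent_trace_eq {c : Fin 2 → F} (hc : c 0 ≠ c 1) (τ : F) :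
    (#{S | IsConj !![1, 1; 0, 1] S ∧ (diagonal c * S).trace = τ} : ℤ) =
      (Fintype.card F - 1) * (1 + if τ = c 0 + c 1 then 1 else 0) := by
  set x := (τ - c 1 * 2) / (c 0 - c 1) with hx
  have hx1 : x = 1 ↔ τ = c 0 + c 1 := by
    rw [hx, div_eq_iff (sub_ne_zero.2 hc)]
    constructor <;> intro h <;> linear_combination h
  have hroot : x * (2 - x) = 1 ↔ τ = c 0 + c 1 := by
    simpa [one_add_one_eq_two, hx1] using mul_sub_eq_mul_iff (r := 1) (s := 1) (x := x)
  have hset : ({S | IsConj !![1, 1; 0, 1] S ∧ (diagonal c * S).trace = τ} : Finset _) =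
      ({S | S.trace = 2 ∧ S.det = 1 ∧ S 0 0 = x} : Finset _).erase 1 := by
    ext S
    simp only [mem_filter, mem_univ, true_and, mem_erase, isConj_unipotent_iff]
    rw [trace_mul_comm, trace_mul_diagonal_eq_iff hc, hx]
    constructor
    · rintro ⟨⟨htr, hdet, hS⟩, h00⟩
      exact ⟨hS, htr, hdet, htr ▸ h00⟩
    · rintro ⟨hS, htr, hdet, h00⟩
      exact ⟨⟨htr, hdet, hS⟩, by rwa [htr]⟩
  have hone : (1 : Matrix (Fin 2) (Fin 2) F) ∈
      ({S | S.trace = 2 ∧ S.det = 1 ∧ S 0 0 = x} : Finset _) ↔ τ = c 0 + c 1 := by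
    simp [trace_fin_two, one_add_one_eq_two, ← hx1, eq_comm]
  rw [hset]
  by_cases hτ : τ = c 0 + c 1
  · rw [cast_card_erase_of_mem (hone.2 hτ), card_trace_det_apply_zero_zero, if_pos (hroot.2 hτ),
      if_pos hτ]
    ring
  · rw [erase_eq_of_notMem (mt hone.1 hτ), card_trace_det_apply_zero_zero, if_neg (mt hroot.1 hτ),
      if_neg hτ]
    ring

lemma sum_isConj_unipotent_trace {c : Fin 2 → F} (hc : c 0 ≠ c 1) (f : F → ℤ) :
    ∑ S with IsConj !![1, 1; 0, 1] S, f (diagonal c * S).trace =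
      (Fintype.card F - 1) * (∑ τ, f τ + f (c 0 + c 1)) := by
  rw [← sum_fiberwise']
  simp only [sum_const, filter_filter, nsmul_eq_mul, card_isConj_unipotent_trace_eq hc]
  simp [mul_assoc, add_mul, ite_mul, one_mul, zero_mul, ← mul_sum, sum_add_distrib]

lemma card_companionTwo_mul {D : F} (A : Matrix (Fin 2) (Fin 2) F) (hX : X.det ≠ 0)
    (hA : X.det * D = A.det) :
    #{τ | IsConj A (X * companionTwo τ D)} =
      #{Y | IsConj A Y ∧ Y 0 0 = X 0 1 ∧ Y 1 0 = X 1 1} := by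
  have hXunit : IsUnit X.det := isUnit_iff_ne_zero.2 hX
  refine card_nbij (fun τ ↦ X * companionTwo τ D) ?_ ?_ ?_
  · intro τ hτ
    simpa [companionTwo, mul_apply] using (mem_filter.1 hτ).2
  · intro τ _ τ' _ h
    have h' := (isUnit_iff_isUnit_det X).2 hXunit |>.mul_left_cancel h
    simpa [companionTwo] using congrFun₂ h' 1 1
  · intro Y hY
    obtain ⟨hYA, h0, h1⟩ := (mem_filter.1 hY).2
    have hXY : X * (X⁻¹ * Y) = Y := mul_nonsing_inv_cancel_left X Y hXunit
    have hcol (i : Fin 2) : (X⁻¹ * Y) i 0 = (1 : Matrix (Fin 2) (Fin 2) F) i 1 := by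
      rw [← nonsing_inv_mul X hXunit]
      simp [mul_apply, h0, h1]
    have hdet : (X⁻¹ * Y).det = D := by
      apply mul_left_cancel₀ hX
      rw [← det_mul, hXY, hA, det_eq_of_isConj_s15 hYA]
    have hcomp : X * companionTwo (X⁻¹ * Y).trace D = Y := by
      rw [← hdet, ← eq_companionTwo (hcol 0) (hcol 1), hXY]
    exact ⟨(X⁻¹ * Y).trace, by simpa [hcomp] using hYA, hcomp⟩

lemma sum_card_shared_column {a b : Fin 2 → F} (ha : a 0 ≠ a 1) (hb : b 0 ≠ b 1)
    (ha0 : ∀ i, a i ≠ 0) (hb0 : ∀ i, b i ≠ 0) :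
    ∑ X with IsConj (diagonal b) X,
        (#{Y | IsConj (diagonal a) Y ∧ Y 0 0 = X 0 1 ∧ Y 1 0 = X 1 1} : ℤ) =
      (Fintype.card F + 1) ^ 2 := by
  simp_rw [isConj_diagonal_iff ha, isConj_diagonal_iff hb, and_assoc, card_trace_det_col_zero]
  rw [← sum_fiberwise' _ (fun X : Matrix (Fin 2) (Fin 2) F ↦ (X 0 1, X 1 1)) fun v : F × F ↦
    ((if v.2 = 0 then if v.1 * (a 0 + a 1 - v.1) = a 0 * a 1 then Fintype.card F else 0
      else 1 : ℕ) : ℤ)]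
  simp only [sum_const, filter_filter, Prod.ext_iff, and_assoc, card_trace_det_col_one,
    nsmul_eq_mul, mul_sub_eq_mul_iff]
  push_cast
  rw [Fintype.sum_prod_type, sum_sum_ite_mul_ite ha hb ha0 hb0]
  ring

lemma sum_transportCount_companionTwo {a b : Fin 2 → F} {D : F} (ha : a 0 ≠ a 1) (hb : b 0 ≠ b 1)
    (ha0 : ∀ i, a i ≠ 0) (hb0 : ∀ i, b i ≠ 0) (hdet : b 0 * b 1 * D = a 0 * a 1) :
    ∑ τ, (transportCount (diagonal a) (diagonal b) (companionTwo τ D) : ℤ) =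
      (Fintype.card F + 1) ^ 2 := by
  have hswap : ∑ τ, (transportCount (diagonal a) (diagonal b) (companionTwo τ D) : ℤ) =
      ∑ X with IsConj (diagonal b) X, (#{τ | IsConj (diagonal a) (X * companionTwo τ D)} : ℤ) := by
    simp_rw [transportCount, ← filter_filter, card_filter]
    push_cast
    exact sum_comm
  rw [hswap, ← sum_card_shared_column ha hb ha0 hb0]
  refine sum_congr rfl fun X hX ↦ ?_
  have hXdet : X.det = b 0 * b 1 := ((isConj_diagonal_iff hb).1 (mem_filter.1 hX).2).2
  rw [card_companionTwo_mul]
  · rw [hXdet]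
    exact mul_ne_zero (hb0 0) (hb0 1)
  · rw [hXdet, hdet, det_diagonal, Fin.prod_univ_two]

theorem sum_transportCount_diagonal_mul_unipotent {a b c : Fin 2 → F} (ha : a 0 ≠ a 1)
    (hb : b 0 ≠ b 1) (hc : c 0 ≠ c 1) (ha0 : ∀ i, a i ≠ 0) (hb0 : ∀ i, b i ≠ 0)
    (hc0 : ∀ i, c i ≠ 0) (hdet : b 0 * b 1 * (c 0 * c 1) = a 0 * a 1)
    (hgen : ∀ i j, b j * c 0 ≠ a i) :
    ∑ S with IsConj !![1, 1; 0, 1] S,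
        (transportCount (diagonal a) (diagonal b) (diagonal c * S) : ℤ) =
      (Fintype.card F - 1) * (Fintype.card F ^ 2 + 3 * Fintype.card F) := by
  set f : F → ℤ := fun τ ↦
    transportCount (diagonal a) (diagonal b) (companionTwo τ (c 0 * c 1)) with hf
  have hfS (S) (hS : IsConj !![1, 1; 0, 1] S) :
      (transportCount (diagonal a) (diagonal b) (diagonal c * S) : ℤ) =
        f (diagonal c * S).trace := by
    have hcomp := isConj_companionTwo (diagonal_mul_notMem_range_scalar hc0 hS)
    rw [det_mul, det_diagonal, Fin.prod_univ_two, (isConj_unipotent_iff.1 hS).2.1, mul_one]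
      at hcomp
    exact congrArg Nat.cast (transportCount_congr _ _ hcomp.symm)
  have hfc : f (c 0 + c 1) = Fintype.card F - 1 := by
    rw [← transportCount_diagonal ha hb hc hdet hgen]
    have hcomp := isConj_companionTwo (diagonal_notMem_range_scalar hc)
    rw [trace_diagonal, Fin.sum_univ_two, det_diagonal, Fin.prod_univ_two] at hcomp
    exact congrArg Nat.cast (transportCount_congr _ _ hcomp)
  rw [sum_congr rfl fun S hS ↦ hfS S (mem_filter.1 hS).2, sum_isConj_unipotent_trace hc, hfc, hf,
    sum_transportCount_companionTwo ha hb ha0 hb0 hdet]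
  ring

end Count
end Field

theorem GL2_quadruple_count_three_ss_one_unipotent_general {F : Type*} [Field F] [Fintype F]
    {a b c : Fin 2 → F} (ha : a 0 ≠ a 1) (hb : b 0 ≠ b 1) (hc : c 0 ≠ c 1)
    (hprod : a 0 * a 1 * b 0 * b 1 * c 0 * c 1 = 1) (hgen : ∀ i j l, a i * b j * c l ≠ 1) :
    (Nat.card {x : Matrix (Fin 2) (Fin 2) F × Matrix (Fin 2) (Fin 2) F ×
        Matrix (Fin 2) (Fin 2) F × Matrix (Fin 2) (Fin 2) F //
        IsConj (diagonal a) x.1 ∧ IsConj (diagonal b) x.2.1 ∧ IsConj (diagonal c) x.2.2.1 ∧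
        IsConj !![1, 1; 0, 1] x.2.2.2 ∧ x.1 * x.2.1 * x.2.2.1 * x.2.2.2 = 1} : ℤ) =
      ((Fintype.card F : ℤ) ^ 3 - Fintype.card F) *
        ((Fintype.card F : ℤ) * ((Fintype.card F : ℤ) + 3)) := by
  classical
  have ha0 (i) : a i ≠ 0 := by rintro h; fin_cases i <;> simp_all
  have hb0 (i) : b i ≠ 0 := by rintro h; fin_cases i <;> simp_all
  have hc0 (i) : c i ≠ 0 := by rintro h; fin_cases i <;> simp_all
  obtain ⟨A, hA, hA'⟩ := exists_units_eq_diagonal ha0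
  have hdet : b 0 * b 1 * (c 0 * c 1) = a⁻¹ 0 * a⁻¹ 1 := by
    rw [Pi.inv_apply, Pi.inv_apply, ← mul_inv]
    exact eq_inv_of_mul_eq_one_left (by linear_combination hprod)
  have hgen' (i j) : b j * c 0 ≠ a⁻¹ i := fun h ↦
    hgen i j 0 (by rw [mul_assoc, h, Pi.inv_apply, mul_inv_cancel₀ (ha0 i)])
  rw [← hA, card_quadruples_mul_eq_one, hA']
  push_cast
  rw [card_isConj_diagonal hc, sum_transportCount_diagonal_mul_unipotent (a := a⁻¹)
    (inv_injective.ne ha) hb hc (fun i ↦ inv_ne_zero (ha0 i)) hb0 hc0 hdet hgen']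
  ring

/-- Genus 0, four punctures, `GL₂`, three generic regular semisimple classes and one regular
unipotent class: the number of quadruples `(S₁,S₂,S₃,S₄) ∈ C₁ × C₂ × C₃ × C₄` with
`S₁S₂S₃S₄ = 1` is `(q³−q)·q(q+3)`. -/
theorem GL2_quadruple_count_three_ss_one_unipotent
    {F : Type*} [Field F] [Fintype F] (hchar : ringChar F ≠ 2)
    (q : ℕ) (hq : q = Fintype.card F)
    (a₁ a₂ b₁ b₂ c₁ c₂ : F)
    (ha0 : a₁ ≠ 0) (ha0' : a₂ ≠ 0) (hb0 : b₁ ≠ 0) (hb0' : b₂ ≠ 0)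
    (hc0 : c₁ ≠ 0) (hc0' : c₂ ≠ 0)
    (ha : a₁ ≠ a₂) (hb : b₁ ≠ b₂) (hc : c₁ ≠ c₂)
    (hprod : a₁ * a₂ * b₁ * b₂ * c₁ * c₂ = 1)
    (hgen : ∀ i j l : Fin 2, ![a₁, a₂] i * ![b₁, b₂] j * ![c₁, c₂] l ≠ 1) :
    (Nat.card {x : Matrix (Fin 2) (Fin 2) F × Matrix (Fin 2) (Fin 2) F ×
        Matrix (Fin 2) (Fin 2) F × Matrix (Fin 2) (Fin 2) F //
        IsConj (Matrix.diagonal ![a₁, a₂]) x.1 ∧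
        IsConj (Matrix.diagonal ![b₁, b₂]) x.2.1 ∧
        IsConj (Matrix.diagonal ![c₁, c₂]) x.2.2.1 ∧
        IsConj (!![1, 1; 0, 1] : Matrix (Fin 2) (Fin 2) F) x.2.2.2 ∧
        x.1 * x.2.1 * x.2.2.1 * x.2.2.2 = 1} : ℤ) =
      ((q : ℤ) ^ 3 - q) * ((q : ℤ) * ((q : ℤ) + 3)) := by
  subst hq
  exact GL2_quadruple_count_three_ss_one_unipotent_general ha hb hc hprod hgen
end
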